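/- (Multiple Bailey transformation I.) Let a, x ∈ ℂ^m and s, c_0, c_1, c_2, d_0, d_1, d_2 ∈ ℂ satisfy Σ_{i=1}^m a_i + Σ_{k=0}^{2}(c_k + d_k) = 2δ + 3s and d_2 = −Nδ for some N ∈ ℕ. Set s̃ = δ + 2s − c_2 − d_0 − d_1, c̃_2 = δ + s − d_0 − d_1, d̃_0 = δ + s − c_2 − d_1, d̃_1 = δ + s − c_2 − d_0. Then, for generic parameters (all brackets appearing in denominators nonzero): E^{m,3}( a; x | s̃; (c_0, c_1, c̃_2); (d̃_0, d̃_1, d_2) ) = ( [δ+s−c_0]_N [δ+s−c_1]_N / ([δ+s̃−c_0]_N [δ+s̃−c_1]_N) ) · ∏_{i=1}^m ( [δ+s+x_i−a_i]_N [δ+s̃+x_i]_N / ([δ+s+x_i]_N [δ+s̃+x_i−a_i]_N) ) · E^{m,3}( a; x | s; (c_0, c_1, c_2); (d_0, d_1, d_2) ). -/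

import Mathlib

/-!
The proof rests on a duality for sums over multi-indices of fixed weight. For points `xᵢ`, poles
`yₖ` and zeros `pᵣ`, `p₀` let `Fsum` be the sum over `|μ| = N` of
`∏ᵢ [xᵢ - p₀]_{μᵢ} ∏ᵣ [xᵢ - pᵣ]_{μᵢ} / (∏ⱼ [xᵢ - xⱼ - μⱼδ]_{μᵢ} ∏ₖ [xᵢ - yₖ]_{μᵢ})`.
If there are as many zeros as points and poles together, with equal sums, then `Fsum` is
unchanged when `(x, y, p, p₀)` is replaced by `(-y, -x, -p, -p₀)` (`duality`).

The Riemann relation implies, by induction on the number of nodes, the partial fraction identity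
`∑ₖ ∏ᵣ [yₖ - wᵣ] / ∏_{l ≠ k} [yₖ - yₗ] = 0` for as many `w` as `y`, with equal sums
(`partial_fraction_multiset`). It shows that `Fsum` satisfies two recursions in `N`: the first one
removes the first step of `μ` and shifts a point `xₖ` (`Fsum_succ_first`); the second one removes
the last step of `μ` and, through a further application of the identity, shifts a pole `yₖ`
(`Fsum_succ_last`). The second recursion for `(x, y)` is the first one for `(-y, -x)`, so duality
follows by induction on `N`.

A series `E^{m,3}` terminated by `v₂ = -Nδ` is a constant multiple of an `Fsum` with `m + 1` points,
namely the `xᵢ` and `-s - Nδ`, and the two poles attached to `d₀` and `d₁` (`Fterm_eq`). Its dual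
(`Evw_dual`) is a sum over two-component multi-indices. The two points `δ + s - d₀`, `δ + s - d₁` of
the dual sum do not change on passing to the tilded parameters, and every summand is multiplied by
the same constant (`Fsum_swap`); this proves the transformation for parameters in general position
(`bailey_generic`).

Duality needs more brackets to be nonzero than the statement assumes. Both sides of the
transformation are continuous along a suitable complex line of parameters, all but countably many
points of which are in general position, so the identity persists at the given parameters.
-/

open Finset

/-- Shifted factorial `[x]_k = [x][x+δ]⋯[x+(k-1)δ]` with respect to the bracket `f`. -/
noncomputable def sf (f : ℂ → ℂ) (δ : ℂ) (x : ℂ) (k : ℕ) : ℂ :=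
  ∏ i ∈ Finset.range k, f (x + (i : ℂ) * δ)

/-- Difference product `Δ(x) = ∏_{i<j} [x_i - x_j]`. -/
noncomputable def Del (f : ℂ → ℂ) {m : ℕ} (x : Fin m → ℂ) : ℂ :=
  ∏ i : Fin m, ∏ j ∈ Finset.univ.filter (fun j => i < j), f (x i - x j)

/-- The multiple hypergeometric series `Φ^{m,n}_N(a; x | b; c)`. -/
noncomputable def Phi (f : ℂ → ℂ) (δ : ℂ) {m n : ℕ} (a x : Fin m → ℂ)
    (b c : Fin n → ℂ) (N : ℕ) : ℂ :=
  ∑ μ ∈ Finset.Nat.antidiagonalTuple m N,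
    (Del f (fun i => x i + (μ i : ℂ) * δ) / Del f x)
      * (∏ i, ∏ j, sf f δ (x i - x j + a j) (μ i) / sf f δ (x i - x j + δ) (μ i))
      * (∏ i, ∏ k, sf f δ (x i + b k) (μ i) / sf f δ (x i + c k) (μ i))

/-- The `μ`-th summand of the very well-poised series `E^{m,n}(a; x | s; u; v)`. -/
noncomputable def Eterm (f : ℂ → ℂ) (δ : ℂ) {m n : ℕ} (a x : Fin m → ℂ) (s : ℂ)
    (u v : Fin n → ℂ) (μ : Fin m → ℕ) : ℂ :=
  (Del f (fun i => x i + (μ i : ℂ) * δ) / Del f x)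
    * (∏ i, f (x i + s + (((∑ j, μ j) + μ i : ℕ) : ℂ) * δ) / f (x i + s))
    * (∏ j, (sf f δ (s + x j) (∑ i, μ i) / sf f δ (δ + s + x j - a j) (∑ i, μ i))
        * ∏ i, sf f δ (x i - x j + a j) (μ i) / sf f δ (x i - x j + δ) (μ i))
    * (∏ k, (sf f δ (v k) (∑ i, μ i) / sf f δ (δ + s - u k) (∑ i, μ i))
        * ∏ i, sf f δ (x i + u k) (μ i) / sf f δ (x i + δ + s - v k) (μ i))

/-- The very well-poised multiple series `E^{m,n}(a; x | s; u; v)`. -/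
noncomputable def Evw (f : ℂ → ℂ) (δ : ℂ) {m n : ℕ} (a x : Fin m → ℂ) (s : ℂ)
    (u v : Fin n → ℂ) : ℂ :=
  ∑' μ : Fin m → ℕ, Eterm f δ a x s u v μ

/-- The one-dimensional very well-poised series `_{r+3}E_{r+2}(s; u_1, …, u_r)`. -/
noncomputable def E1 (f : ℂ → ℂ) (δ : ℂ) {r : ℕ} (s : ℂ) (u : Fin r → ℂ) : ℂ :=
  ∑' k : ℕ, (f (s + 2 * (k : ℂ) * δ) / f s) * (sf f δ s k / sf f δ δ k)
    * ∏ i, sf f δ (u i) k / sf f δ (δ + s - u i) k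

/-! ### The bracket and partial fractions -/

/-- The Riemann relation in the form assumed of the bracket `f = [·]`. -/
def RiemannRel (f : ℂ → ℂ) : Prop :=
  ∀ x y u v : ℂ,
      f (x + y) * f (x - y) * f (u + v) * f (u - v) =
        f (x + u) * f (x - u) * f (y + v) * f (y - v)
          - f (x + v) * f (x - v) * f (y + u) * f (y - u)

theorem zeros_countable {f : ℂ → ℂ} (hf : f ≠ 0) (hdiff : Differentiable ℂ f) :
    {z : ℂ | f z = 0}.Countable := by
  have han : AnalyticOnNhd ℂ f Set.univ := fun z _ => hdiff.analyticAt z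
  have hcd : f ⁻¹' {0}ᶜ ∈ Filter.codiscrete ℂ := by
    obtain ⟨w, hw⟩ : ∃ w, f w ≠ 0 := by
      by_contra! h
      exact hf (funext h)
    exact han.preimage_zero_mem_codiscrete (x := w) hw
  have h := (mem_codiscrete'.mp hcd).2
  have h2 : (f ⁻¹' {0}ᶜ)ᶜ.Countable :=
    (HereditarilyLindelofSpace.isHereditarilyLindelof_univ.isLindelof_subset
      (Set.subset_univ _)).countable_of_isDiscrete h
  refine h2.mono ?_
  intro z hz
  simpa using hz

/-- A countable family of nonconstant affine functions of `t` avoids the zeros of `f` for all `t`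
in a dense set. -/
theorem dense_ne_zero {f : ℂ → ℂ} (hf : f ≠ 0) (hdiff : Differentiable ℂ f)
    {J : Type*} [Countable J] (p q : J → ℂ) (hq : ∀ j, q j ≠ 0) :
    Dense {t : ℂ | ∀ j, f (p j + t * q j) ≠ 0} := by
  have hc : (⋃ j, (fun t : ℂ => p j + t * q j) ⁻¹' {z : ℂ | f z = 0}).Countable := by
    refine Set.countable_iUnion fun j => (zeros_countable hf hdiff).preimage ?_
    intro t t' h
    have h' : t * q j = t' * q j := add_left_cancel h
    exact mul_right_cancel₀ (hq j) h'
  convert hc.dense_compl ℂ using 1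
  ext t
  simp

theorem odd_zero {f : ℂ → ℂ} (hodd : ∀ t : ℂ, f (-t) = -f t) : f 0 = 0 := by
  have h := hodd 0
  rw [neg_zero] at h
  linear_combination h / 2

theorem odd_sub {f : ℂ → ℂ} (hodd : ∀ t : ℂ, f (-t) = -f t) (a b : ℂ) :
    f (a - b) = - f (b - a) := by
  rw [← hodd]; congr 1; ring

/-- The functions `z ↦ [z - w₁][z - w₂]` with `w₁ + w₂` fixed span a plane; expansion in the basis
vanishing at `a`, respectively at `b`. -/
theorem sub_expand {f : ℂ → ℂ} (hodd : ∀ t : ℂ, f (-t) = -f t)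
    (hRiem : RiemannRel f) (z a b w1 w2 : ℂ) :
    f (a - b) * f (w1 + w2 - a - b) * (f (z - w1) * f (z - w2)) =
      f (b - w1) * f (b - w2) * (f (z - a) * f (z - (w1 + w2 - a)))
      - f (a - w1) * f (a - w2) * (f (z - b) * f (z - (w1 + w2 - b))) := by
  have h := hRiem (z - (w1+w2)/2) ((w1 - w2)/2) (a - (w1+w2)/2) (b - (w1+w2)/2)
  rw [show z - (w1 + w2) / 2 + (w1 - w2) / 2 = z - w2 by ring,
    show z - (w1 + w2) / 2 - (w1 - w2) / 2 = z - w1 by ring,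
    show a - (w1 + w2) / 2 + (b - (w1 + w2) / 2) = -(w1 + w2 - a - b) by ring,
    show a - (w1 + w2) / 2 - (b - (w1 + w2) / 2) = a - b by ring,
    show z - (w1 + w2) / 2 + (a - (w1 + w2) / 2) = z - (w1 + w2 - a) by ring,
    show z - (w1 + w2) / 2 - (a - (w1 + w2) / 2) = z - a by ring,
    show z - (w1 + w2) / 2 + (b - (w1 + w2) / 2) = z - (w1 + w2 - b) by ring,
    show z - (w1 + w2) / 2 - (b - (w1 + w2) / 2) = z - b by ring,
    show (w1 - w2) / 2 + (b - (w1 + w2) / 2) = b - w2 by ring,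
    show (w1 - w2) / 2 - (b - (w1 + w2) / 2) = -(b - w1) by ring,
    show (w1 - w2) / 2 + (a - (w1 + w2) / 2) = a - w2 by ring,
    show (w1 - w2) / 2 - (a - (w1 + w2) / 2) = -(a - w1) by ring, hodd, hodd, hodd] at h
  linear_combination -h

/-- A factor `[yₖ - yₐ]` in the numerators of a partial fraction sum removes the node `yₐ`. -/
theorem node_remove {f : ℂ → ℂ} (hodd : ∀ t : ℂ, f (-t) = -f t) {ι : Type*} [DecidableEq ι]
    (S : Finset ι) (y : ι → ℂ) (hy : ∀ i ∈ S, ∀ j ∈ S, i ≠ j → f (y i - y j) ≠ 0)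
    (a : ι) (ha : a ∈ S) (g : ι → ℂ) :
    ∑ k ∈ S, f (y k - y a) * g k / ∏ l ∈ S.erase k, f (y k - y l) =
      ∑ k ∈ S.erase a, g k / ∏ l ∈ (S.erase a).erase k, f (y k - y l) := by
  rw [← Finset.add_sum_erase S _ ha, sub_self, odd_zero hodd, zero_mul, zero_div, zero_add]
  refine Finset.sum_congr rfl fun k hk => ?_
  have hk' := Finset.mem_erase.mp hk
  have ha' : a ∈ S.erase k := Finset.mem_erase.mpr ⟨hk'.1.symm, ha⟩
  rw [← Finset.mul_prod_erase _ _ ha', Finset.erase_right_comm,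
    mul_div_mul_left _ _ (hy k hk'.2 a ha hk'.1)]

/-- Partial fraction identity: nodes `y k`, `k ∈ S`, and as many zeros `w ∈ W`, with equal sums. -/
theorem partial_fraction_multiset {f : ℂ → ℂ} (hf : f ≠ 0) (hodd : ∀ t : ℂ, f (-t) = -f t)
    (hdiff : Differentiable ℂ f) (hRiem : RiemannRel f) {ι : Type*} [DecidableEq ι] (n : ℕ) :
    ∀ (S : Finset ι) (y : ι → ℂ) (W : Multiset ℂ), S.card = n → W.card = n →
      (∀ i ∈ S, ∀ j ∈ S, i ≠ j → f (y i - y j) ≠ 0) → W.sum = ∑ i ∈ S, y i →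
      ∑ k ∈ S, (W.map fun w => f (y k - w)).prod / ∏ l ∈ S.erase k, f (y k - y l) = 0 := by
  induction n with
  | zero =>
    intro S y W hS _ _ _
    rw [Finset.card_eq_zero.mp hS, Finset.sum_empty]
  | succ n ih =>
    intro S y W hS hW hy hsum
    obtain rfl | rfl | n2 : n = 0 ∨ n = 1 ∨ 2 ≤ n := by omega
    · obtain ⟨a, rfl⟩ := Finset.card_eq_one.mp hS
      obtain ⟨w, rfl⟩ := Multiset.card_eq_one.mp hW
      simp only [Multiset.sum_singleton, Finset.sum_singleton] at hsum
      simp [hsum, odd_zero hodd]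
    · obtain ⟨a, b, hab, rfl⟩ := Finset.card_eq_two.mp hS
      obtain ⟨w, v, rfl⟩ := Multiset.card_eq_two.mp hW
      have hne := hy a (by simp) b (by simp) hab
      rw [Finset.sum_pair hab] at hsum ⊢
      have e1 : ({a, b} : Finset ι).erase a = {b} := by
        ext t; simp only [mem_erase, mem_insert, mem_singleton]; grind
      have e2 : ({a, b} : Finset ι).erase b = {a} := by
        ext t; simp only [mem_erase, mem_insert, mem_singleton]; grind
      rw [e1, e2]
      have hs : w + v = y a + y b := by simpa using hsum
      simp only [Multiset.insert_eq_cons, Multiset.map_cons, Multiset.map_singleton,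
        Multiset.prod_cons, Multiset.prod_singleton, Finset.prod_singleton]
      rw [odd_sub hodd (y b) (y a), show y b - w = -(y a - v) by linear_combination -hs,
        show y b - v = -(y a - w) by linear_combination -hs, hodd, hodd]
      field_simp
      ring
    · -- two nodes `a`, `b` to be removed, and three zeros
      obtain ⟨a, ha, b, hb, hab⟩ := Finset.one_lt_card.mp (show 1 < S.card by omega)
      obtain ⟨w1, W1, rfl⟩ : ∃ w1 W1, W = w1 ::ₘ W1 := by
        obtain ⟨w, hw⟩ := Multiset.card_pos_iff_exists_mem.mp (show 0 < W.card by omega)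
        exact ⟨w, _, (Multiset.cons_erase hw).symm⟩
      rw [Multiset.card_cons] at hW
      obtain ⟨w2, W2, rfl⟩ : ∃ w1 W, W1 = w1 ::ₘ W := by
        obtain ⟨w, hw⟩ := Multiset.card_pos_iff_exists_mem.mp (show 0 < W1.card by omega)
        exact ⟨w, _, (Multiset.cons_erase hw).symm⟩
      rw [Multiset.card_cons] at hW
      obtain ⟨w3, W3, rfl⟩ : ∃ w1 W, W2 = w1 ::ₘ W := by
        obtain ⟨w, hw⟩ := Multiset.card_pos_iff_exists_mem.mp (show 0 < W2.card by omega)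
        exact ⟨w, _, (Multiset.cons_erase hw).symm⟩
      rw [Multiset.card_cons] at hW
      simp only [Multiset.sum_cons] at hsum
      have key : ∀ v1 v3 : ℂ, v1 + v3 = w1 + w3 → f (v1 + w2 - y a - y b) ≠ 0 →
          ∑ k ∈ S, ((v1 ::ₘ w2 ::ₘ v3 ::ₘ W3).map fun w => f (y k - w)).prod /
            ∏ l ∈ S.erase k, f (y k - y l) = 0 := by
        intro v1 v3 hv hne
        have hnab := hy a ha b hb hab
        have red : ∀ c ∈ S,
            ∑ k ∈ S, f (y k - y c) * (((v1 + w2 - y c) ::ₘ v3 ::ₘ W3).map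
              fun w => f (y k - w)).prod / ∏ l ∈ S.erase k, f (y k - y l) = 0 := by
          intro c hc
          rw [node_remove hodd S y hy c hc]
          apply ih
          · rw [Finset.card_erase_of_mem hc]; omega
          · simp only [Multiset.card_cons]; omega
          · intro i hi j hj
            exact hy i (Finset.mem_of_mem_erase hi) j (Finset.mem_of_mem_erase hj)
          · simp only [Multiset.sum_cons]
            have := Finset.add_sum_erase S y hc
            linear_combination hv + hsum - this
        have ra := red a ha
        have rb := red b hb
        have comb : f (y a - y b) * f (v1 + w2 - y a - y b) *
            ∑ k ∈ S, ((v1 ::ₘ w2 ::ₘ v3 ::ₘ W3).map fun w => f (y k - w)).prod /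
              ∏ l ∈ S.erase k, f (y k - y l) = 0 := by
          have e : ∀ k ∈ S, f (y a - y b) * f (v1 + w2 - y a - y b) *
              (((v1 ::ₘ w2 ::ₘ v3 ::ₘ W3).map fun w => f (y k - w)).prod /
              ∏ l ∈ S.erase k, f (y k - y l)) =
            f (y b - v1) * f (y b - w2) * (f (y k - y a) * (((v1 + w2 - y a) ::ₘ v3 ::ₘ W3).map
              fun w => f (y k - w)).prod / ∏ l ∈ S.erase k, f (y k - y l)) -
            f (y a - v1) * f (y a - w2) * (f (y k - y b) * (((v1 + w2 - y b) ::ₘ v3 ::ₘ W3).map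
              fun w => f (y k - w)).prod / ∏ l ∈ S.erase k, f (y k - y l)) := by
            intro k _
            have h := sub_expand hodd hRiem (y k) (y a) (y b) v1 w2
            simp only [Multiset.map_cons, Multiset.prod_cons, div_eq_mul_inv]
            linear_combination (f (y k - v3) * (Multiset.map (fun w => f (y k - w)) W3).prod *
              (∏ l ∈ S.erase k, f (y k - y l))⁻¹) * h
          rw [Finset.mul_sum, Finset.sum_congr rfl e, Finset.sum_sub_distrib, ← Finset.mul_sum,
            ← Finset.mul_sum, ra, rb]
          ring
        exact (mul_eq_zero.mp comb).resolve_left (mul_ne_zero hnab hne)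
      -- moving `w1` and `w3` in opposite directions keeps the balance and reaches generic position
      have hd := dense_ne_zero hf hdiff (fun _ : Unit => w1 + w2 - y a - y b) (fun _ => 1)
        (fun _ => one_ne_zero)
      have hcf := hdiff.continuous
      have hcont : Continuous fun t : ℂ =>
          ∑ k ∈ S, (((w1 + t) ::ₘ w2 ::ₘ (w3 - t) ::ₘ W3).map fun w => f (y k - w)).prod /
            ∏ l ∈ S.erase k, f (y k - y l) := by
        simp only [Multiset.map_cons, Multiset.prod_cons]
        fun_prop
      have h0 := hcont.ext_on hd (continuous_const (y := (0 : ℂ))) (by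
        intro t ht
        refine key (w1 + t) (w3 - t) (by ring) ?_
        have := ht ()
        rwa [show w1 + t + w2 - y a - y b = w1 + w2 - y a - y b + t * 1 by ring])
      simpa using congrFun h0 0

/-- The partial fraction identity for zeros indexed by a finite type. -/
theorem partial_fraction {f : ℂ → ℂ} (hf : f ≠ 0) (hodd : ∀ t : ℂ, f (-t) = -f t)
    (hdiff : Differentiable ℂ f) (hRiem : RiemannRel f) {ι ρ : Type*} [DecidableEq ι] [Fintype ι]
    [Fintype ρ] (y : ι → ℂ) (w : ρ → ℂ) (hcard : Fintype.card ρ = Fintype.card ι)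
    (hy : ∀ i j, i ≠ j → f (y i - y j) ≠ 0) (hsum : ∑ r, w r = ∑ i, y i) :
    ∑ k, (∏ r, f (y k - w r)) / ∏ l ∈ univ.erase k, f (y k - y l) = 0 := by
  have h := partial_fraction_multiset hf hodd hdiff hRiem (Fintype.card ι) univ y
    ((univ : Finset ρ).val.map w) rfl (by simpa using hcard) (fun i _ j _ => hy i j) hsum
  simpa [Multiset.map_map] using h

/-- The partial fraction identity for two families of nodes `x`, `y`, with zeros `p` and `p0`. -/
theorem partial_fraction_sum {f : ℂ → ℂ} (hf : f ≠ 0) (hodd : ∀ t : ℂ, f (-t) = -f t)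
    (hdiff : Differentiable ℂ f) (hRiem : RiemannRel f) {ι κ ρ : Type*} [DecidableEq ι] [Fintype ι]
    [DecidableEq κ] [Fintype κ] [Fintype ρ] (x : ι → ℂ) (y : κ → ℂ) (p : ρ → ℂ) (p0 : ℂ)
    (hcard : Fintype.card ρ + 1 = Fintype.card ι + Fintype.card κ)
    (hx : ∀ i j, i ≠ j → f (x i - x j) ≠ 0) (hy : ∀ i j, i ≠ j → f (y i - y j) ≠ 0)
    (hxy : ∀ i k, f (x i - y k) ≠ 0) (hsum : ∑ r, p r + p0 = ∑ i, x i + ∑ k, y k) :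
    ∑ i, (∏ r, f (x i - p r)) * f (x i - p0) /
        ((∏ j ∈ univ.erase i, f (x i - x j)) * ∏ k, f (x i - y k)) =
      - ∑ k, (∏ r, f (y k - p r)) * f (y k - p0) /
        ((∏ l ∈ univ.erase k, f (y k - y l)) * ∏ i, f (y k - x i)) := by
  classical
  have h := partial_fraction hf hodd hdiff hRiem (ι := ι ⊕ κ) (ρ := Option ρ) (Sum.elim x y)
    (fun o => o.elim p0 p) (by simpa using hcard) (by
      rintro (i | i) (j | j) hij
      · exact hx i j (by simpa using hij)
      · exact hxy i j
      · simp only [Sum.elim_inl, Sum.elim_inr]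
        rw [odd_sub hodd]
        exact neg_ne_zero.mpr (hxy j i)
      · exact hy i j (by simpa using hij)) (by
      simp only [Fintype.sum_option, Fintype.sum_sum_type, Sum.elim_inl, Sum.elim_inr,
        Option.elim_none, Option.elim_some]
      linear_combination hsum)
  have e1 : ∀ i : ι, ∏ l ∈ (univ : Finset (ι ⊕ κ)).erase (Sum.inl i),
      f (x i - Sum.elim x y l) = (∏ j ∈ univ.erase i, f (x i - x j)) * ∏ k, f (x i - y k) := by
    intro i
    have : (univ : Finset (ι ⊕ κ)).erase (Sum.inl i) = (univ.erase i).disjSum univ := by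
      ext (j | j) <;> simp
    rw [this, Finset.prod_disjSum]
    simp
  have e2 : ∀ k : κ, ∏ l ∈ (univ : Finset (ι ⊕ κ)).erase (Sum.inr k),
      f (y k - Sum.elim x y l) = (∏ j ∈ univ.erase k, f (y k - y j)) * ∏ i, f (y k - x i) := by
    intro i
    have : (univ : Finset (ι ⊕ κ)).erase (Sum.inr i) = univ.disjSum (univ.erase i) := by
      ext (j | j) <;> simp
    rw [this, Finset.prod_disjSum]
    simp [mul_comm]
  rw [Fintype.sum_sum_type] at h
  simp only [Sum.elim_inl, Sum.elim_inr, e1, e2, Fintype.prod_option, Option.elim_none,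
    Option.elim_some] at h
  rw [eq_neg_iff_add_eq_zero, ← h]
  simp only [mul_comm]

/-- The partial fraction identity with one distinguished node `t`. -/
theorem partial_fraction_option {f : ℂ → ℂ} (hf : f ≠ 0) (hodd : ∀ t : ℂ, f (-t) = -f t)
    (hdiff : Differentiable ℂ f) (hRiem : RiemannRel f) {ι : Type*} [DecidableEq ι] [Fintype ι]
    (x w : ι → ℂ) (t r : ℂ) (hx : ∀ i j, i ≠ j → f (x i - x j) ≠ 0)
    (hxt : ∀ i, f (x i - t) ≠ 0) (hsum : ∑ i, w i + r = ∑ i, x i + t) :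
    ∑ i, (∏ j, f (x i - w j)) * f (x i - r) /
        ((∏ j ∈ univ.erase i, f (x i - x j)) * f (x i - t)) =
      - ((∏ j, f (t - w j)) * f (t - r) / ∏ i, f (t - x i)) := by
  have h := partial_fraction_sum hf hodd hdiff hRiem x (fun _ : Unit => t) w r (by simp) hx
    (fun i j hij => absurd (Subsingleton.elim i j) hij) (fun i _ => hxt i) (by simpa using hsum)
  simpa using h

/-! ### Shifted factorials -/

theorem sf_zero (f : ℂ → ℂ) (δ x : ℂ) : sf f δ x 0 = 1 := by simp [sf]

theorem sf_succ (f : ℂ → ℂ) (δ x : ℂ) (n : ℕ) :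
    sf f δ x (n + 1) = sf f δ x n * f (x + n * δ) := by
  rw [sf, Finset.prod_range_succ, ← sf]

theorem sf_succ' (f : ℂ → ℂ) (δ x : ℂ) (n : ℕ) :
    sf f δ x (n + 1) = f x * sf f δ (x + δ) n := by
  rw [sf, Finset.prod_range_succ', sf, mul_comm]
  congr 1
  · simp
  · refine Finset.prod_congr rfl fun i _ => ?_
    congr 1; push_cast; ring

theorem sf_shift (f : ℂ → ℂ) (δ x : ℂ) (n : ℕ) :
    f x * sf f δ (x + δ) n = sf f δ x n * f (x + n * δ) := by
  rw [← sf_succ', sf_succ]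

theorem sf_add (f : ℂ → ℂ) (δ x : ℂ) (m n : ℕ) :
    sf f δ x (m + n) = sf f δ x m * sf f δ (x + m * δ) n := by
  rw [sf, Finset.prod_range_add, sf, sf]
  congr 1
  refine Finset.prod_congr rfl fun i _ => ?_
  congr 1; push_cast; ring

/-- Reversing the order of the factors. -/
theorem sf_neg {f : ℂ → ℂ} (hodd : ∀ t : ℂ, f (-t) = -f t) (δ x : ℂ) (n : ℕ) :
    sf f δ (δ - n * δ - x) n = (-1) ^ n * sf f δ x n := by
  rw [sf, sf, ← Finset.prod_range_reflect, ← Finset.card_range n, ← Finset.prod_const,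
    Finset.card_range, ← Finset.prod_mul_distrib]
  refine Finset.prod_congr rfl fun i hi => ?_
  have hi' : i + 1 ≤ n := Finset.mem_range.mp hi
  rw [show n - 1 - i = n - (i + 1) by omega, Nat.cast_sub hi', neg_one_mul, ← hodd]
  congr 1; push_cast; ring

theorem sf_ne_zero {f : ℂ → ℂ} {δ x : ℂ} {n : ℕ}
    (h : ∀ l : ℕ, l < n → f (x + l * δ) ≠ 0) : sf f δ x n ≠ 0 :=
  Finset.prod_ne_zero_iff.mpr fun i hi => h i (Finset.mem_range.mp hi)

/-- `z` is generic: no bracket `[z + kδ]`, `k ∈ ℤ`, vanishes. -/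
def Gen (f : ℂ → ℂ) (δ z : ℂ) : Prop := ∀ k : ℤ, f (z + k * δ) ≠ 0

theorem Gen.ne {f : ℂ → ℂ} {δ z : ℂ} (h : Gen f δ z) : f z ≠ 0 := by
  simpa using h 0

theorem Gen.shift {f : ℂ → ℂ} {δ z : ℂ} (h : Gen f δ z) (k : ℤ) : Gen f δ (z + k * δ) := by
  intro l
  have := h (k + l)
  rwa [show z + k * δ + l * δ = z + ((k + l : ℤ) : ℂ) * δ by push_cast; ring]

theorem Gen.of_eq {f : ℂ → ℂ} {δ z w : ℂ} (h : Gen f δ z) (k : ℤ) (e : w = z + k * δ) :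
    Gen f δ w := e ▸ h.shift k

theorem Gen.neg {f : ℂ → ℂ} (hodd : ∀ t : ℂ, f (-t) = -f t) {δ z : ℂ} (h : Gen f δ z) :
    Gen f δ (-z) := by
  intro k
  have := h (-k)
  rw [show -z + k * δ = -(z + ((-k : ℤ) : ℂ) * δ) by push_cast; ring, hodd]
  exact neg_ne_zero.mpr this

theorem Gen.sf_ne {f : ℂ → ℂ} {δ z : ℂ} (h : Gen f δ z) (n : ℕ) : sf f δ z n ≠ 0 :=
  sf_ne_zero fun l _ => by simpa using h l

/-! ### The duality transformation -/

section duality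

set_option linter.unusedSectionVars false

variable {ι κ ρ : Type*} [DecidableEq ι] [Fintype ι] [DecidableEq κ] [Fintype κ] [Fintype ρ]

/-- The product `∏ᵢ [xᵢ - c]_{μᵢ}`. -/
noncomputable def PB (f : ℂ → ℂ) (δ : ℂ) (x : ι → ℂ) (c : ℂ) (μ : ι → ℕ) : ℂ :=
  ∏ i, sf f δ (x i - c) (μ i)

/-- The summand of `Fsum`: points `x`, poles `y`, zeros `p` and a distinguished zero `p0`, which
is the one moving in the recursions. The Vandermonde-type factors of such series are contained in
`∏ᵢⱼ [xᵢ - xⱼ - μⱼδ]_{μᵢ}`; see `Del_prod`. -/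
noncomputable def Fterm (f : ℂ → ℂ) (δ : ℂ) (x : ι → ℂ) (y : κ → ℂ) (p : ρ → ℂ) (p0 : ℂ)
    (μ : ι → ℕ) : ℂ :=
  PB f δ x p0 μ * (∏ r, PB f δ x (p r) μ) /
    ((∏ j, PB f δ x (x j + μ j * δ) μ) * ∏ k, PB f δ x (y k) μ)

/-- The sum of `Fterm` over the multi-indices with `|μ| = N`. -/
noncomputable def Fsum (f : ℂ → ℂ) (δ : ℂ) (x : ι → ℂ) (y : κ → ℂ) (p : ρ → ℂ) (p0 : ℂ)
    (N : ℕ) : ℂ :=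
  ∑ μ ∈ piAntidiag univ N, Fterm f δ x y p p0 μ

theorem PB_first (f : ℂ → ℂ) (δ : ℂ) (x : ι → ℂ) (c : ℂ) (ν : ι → ℕ) (k : ι) :
    PB f δ x c (ν + Pi.single k 1) = f (x k - c) * PB f δ (x + Pi.single k δ) c ν := by
  rw [PB, PB, ← Finset.mul_prod_erase _ _ (Finset.mem_univ k),
    ← Finset.mul_prod_erase _ _ (Finset.mem_univ k), ← mul_assoc]
  congr 1
  · simp only [Pi.add_apply, Pi.single_eq_same]
    rw [sf_succ', add_sub_right_comm]
  · refine Finset.prod_congr rfl fun i hi => ?_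
    have hi' := (Finset.mem_erase.mp hi).1
    simp [Pi.single_eq_of_ne hi']

theorem PB_last (f : ℂ → ℂ) (δ : ℂ) (x : ι → ℂ) (c : ℂ) (ν : ι → ℕ) (k : ι) :
    PB f δ x c (ν + Pi.single k 1) = f (x k + ν k * δ - c) * PB f δ x c ν := by
  rw [PB, PB, ← Finset.mul_prod_erase _ _ (Finset.mem_univ k),
    ← Finset.mul_prod_erase _ _ (Finset.mem_univ k), ← mul_assoc]
  congr 1
  · simp only [Pi.add_apply, Pi.single_eq_same]
    rw [sf_succ, mul_comm, add_sub_right_comm]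
  · refine Finset.prod_congr rfl fun i hi => ?_
    have hi' := (Finset.mem_erase.mp hi).1
    simp [Pi.single_eq_of_ne hi']

theorem PB_shift (f : ℂ → ℂ) (δ : ℂ) (x : ι → ℂ) (c : ℂ) (μ : ι → ℕ) :
    (∏ i, f (x i - c)) * PB f δ x (c - δ) μ = PB f δ x c μ * ∏ i, f (x i + μ i * δ - c) := by
  rw [PB, PB, ← Finset.prod_mul_distrib, ← Finset.prod_mul_distrib]
  refine Finset.prod_congr rfl fun i _ => ?_
  rw [show x i - (c - δ) = x i - c + δ by ring, sf_shift, add_sub_right_comm]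

theorem prod_odd {f : ℂ → ℂ} (hodd : ∀ t : ℂ, f (-t) = -f t) {J : Type*} (S : Finset J) (a : ℂ)
    (b : J → ℂ) : ∏ j ∈ S, f (a - b j) = (-1) ^ S.card * ∏ j ∈ S, f (b j - a) := by
  rw [← Finset.prod_const, ← Finset.prod_mul_distrib]
  refine Finset.prod_congr rfl fun j _ => ?_
  rw [odd_sub hodd, neg_one_mul]

theorem PB_ne_zero {f : ℂ → ℂ} {δ : ℂ} {x : ι → ℂ} {c : ℂ} (h : ∀ i, Gen f δ (x i - c))
    (μ : ι → ℕ) : PB f δ x c μ ≠ 0 :=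
  Finset.prod_ne_zero_iff.mpr fun i _ => (h i).sf_ne _

/-- The factors with `i = j` are `[-μᵢδ]_{μᵢ}`, a product of brackets of nonzero multiples of `δ`. -/
theorem PB_diag_ne_zero {f : ℂ → ℂ} {δ : ℂ} (hδ : ∀ k : ℤ, k ≠ 0 → f ((k : ℂ) * δ) ≠ 0)
    {x : ι → ℂ} (hx : ∀ i j, i ≠ j → Gen f δ (x i - x j)) (μ : ι → ℕ) (j : ι) :
    PB f δ x (x j + μ j * δ) μ ≠ 0 := by
  refine Finset.prod_ne_zero_iff.mpr fun i _ => ?_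
  by_cases hij : i = j
  · subst hij
    refine sf_ne_zero fun l hl => ?_
    have := hδ ((l : ℤ) - μ i) (by omega)
    convert this using 2
    push_cast; ring
  · exact ((hx i j hij).of_eq (-(μ j : ℤ)) (by push_cast; ring)).sf_ne _

/-- A sum over pairs of a multi-index `μ` of weight `N + 1` and a step `k` with `μₖ > 0`, rewritten
in terms of `ν = μ - eₖ`. -/
theorem sum_lower (N : ℕ) (g : ι → (ι → ℕ) → ℂ)
    (hg : ∀ k μ, μ k = 0 → g k μ = 0) :
    ∑ μ ∈ piAntidiag (univ : Finset ι) (N + 1), ∑ k, g k μ =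
      ∑ ν ∈ piAntidiag (univ : Finset ι) N, ∑ k, g k (ν + Pi.single k 1) := by
  rw [Finset.sum_comm, Finset.sum_comm (s := piAntidiag univ N)]
  refine Finset.sum_congr rfl fun k _ => ?_
  symm
  refine Finset.sum_of_injOn (fun ν => ν + Pi.single k 1) ?_ ?_ ?_ ?_
  · intro a _ b _ h
    exact add_right_cancel h
  · intro ν hν
    simp only [Finset.mem_coe, mem_piAntidiag] at hν ⊢
    simp_all [Finset.sum_add_distrib]
  · intro μ hμ hn
    apply hg
    by_contra h0
    apply hn
    have hle : (Pi.single k 1 : ι → ℕ) ≤ μ := by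
      intro i
      by_cases hi : i = k
      · subst hi; simp; omega
      · simp [Pi.single_eq_of_ne hi]
    refine ⟨μ - Pi.single k 1, ?_, tsub_add_cancel_of_le hle⟩
    simp only [Finset.mem_coe, mem_piAntidiag, Finset.mem_univ, implies_true, and_true] at hμ ⊢
    have h1 : ∑ i, (μ - Pi.single k 1 + Pi.single k 1 : ι → ℕ) i = N + 1 := by
      rw [tsub_add_cancel_of_le hle]; exact hμ
    simp only [Pi.add_apply, Finset.sum_add_distrib, Finset.sum_pi_single', Finset.mem_univ,
      if_true] at h1
    simpa using h1
  · intro ν _; rfl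

/-- Effect of the first step, in direction `k`: the point `xₖ` moves by `δ`, as does the zero
`p0`. -/
theorem Fterm_first {f : ℂ → ℂ} {δ : ℂ} (hδ : ∀ k : ℤ, k ≠ 0 → f ((k : ℂ) * δ) ≠ 0)
    {x : ι → ℂ} (hx : ∀ i j, i ≠ j → Gen f δ (x i - x j)) {y : κ → ℂ}
    (hxy : ∀ i k, Gen f δ (x i - y k)) (p : ρ → ℂ) (p0 : ℂ) (k : ι) (ν : ι → ℕ) :
    Fterm f δ x y p p0 (ν + Pi.single k 1) * (∏ l, f (x l - (p0 + δ))) *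
        (∏ l, f (x k - (x l + (ν + Pi.single k 1 : ι → ℕ) l * δ))) * (∏ i, f (x k - y i)) =
      Fterm f δ (x + Pi.single k δ) y p (p0 + δ) ν *
        (f (x k - (p0 + δ)) * ∏ r, f (x k - p r)) *
        ∏ l, f (x l + (ν + Pi.single k 1 : ι → ℕ) l * δ - (p0 + δ)) := by
  have hD := Finset.prod_ne_zero_iff.mpr
    fun j (_ : j ∈ univ) => PB_diag_ne_zero hδ hx (ν + Pi.single k 1) j
  have hE := Finset.prod_ne_zero_iff.mpr
    fun j (_ : j ∈ univ) => PB_ne_zero (fun i => hxy i j) (ν + Pi.single k 1)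
  have hsh := PB_shift f δ x (p0 + δ) (ν + Pi.single k 1)
  rw [add_sub_cancel_right] at hsh
  have hw : ∀ j, x j + (ν + Pi.single k 1 : ι → ℕ) j * δ =
      (x + Pi.single k δ : ι → ℂ) j + ν j * δ := by
    intro j
    by_cases hj : j = k
    · subst hj; simp; ring
    · simp [Pi.single_eq_of_ne hj]
  unfold Fterm
  simp only [PB_first, Finset.prod_mul_distrib] at hD hE hsh ⊢
  simp only [hw] at hD hE hsh ⊢
  rw [mul_ne_zero_iff] at hD hE
  obtain ⟨hD1, hD2⟩ := hD
  obtain ⟨hE1, hE2⟩ := hE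
  generalize ∏ l, f (x k - ((x + Pi.single k δ : ι → ℂ) l + ν l * δ)) = D1 at *
  generalize ∏ j, PB f δ (x + Pi.single k δ) ((x + Pi.single k δ : ι → ℂ) j + ν j * δ) ν = D2 at *
  generalize ∏ i, f (x k - y i) = E1 at *
  generalize ∏ i, PB f δ (x + Pi.single k δ) (y i) ν = E2 at *
  generalize ∏ i, PB f δ (x + Pi.single k δ) (p i) ν = R at *
  rw [mul_assoc _ _ E1, div_mul_eq_mul_div, div_mul_eq_mul_div, div_mul_eq_mul_div,
    div_mul_eq_mul_div, div_eq_div_iff (by positivity) (by positivity)]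
  linear_combination (∏ i, f (x k - p i)) * R * E1 * D1 * D2 * E2 * hsh

/-- Effect of a last step in direction `k` on the denominator `∏ᵢⱼ [xᵢ - xⱼ - μⱼδ]_{μᵢ}`. -/
theorem G_last (f : ℂ → ℂ) (δ : ℂ) (x : ι → ℂ) (k : ι) (ν : ι → ℕ) :
    (∏ j, PB f δ x (x j + (ν + Pi.single k 1 : ι → ℕ) j * δ) (ν + Pi.single k 1)) *
        (∏ j ∈ univ.erase k, f (x j + ν j * δ - (x k + ν k * δ + δ))) =
      (∏ j, f (x j - (x k + ν k * δ + δ))) * (∏ j, PB f δ x (x j + ν j * δ) ν) *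
        ∏ j ∈ univ.erase k, f (x k + ν k * δ - (x j + ν j * δ)) := by
  have hsh := PB_shift f δ x (x k + ν k * δ + δ) ν
  rw [add_sub_cancel_right,
    ← Finset.mul_prod_erase univ (fun i => f (x i + ν i * δ - (x k + ν k * δ + δ)))
    (Finset.mem_univ k), show x k + ν k * δ - (x k + ν k * δ + δ) = -δ by ring] at hsh
  have e0 := (Finset.mul_prod_erase univ
    (fun j => PB f δ x (x j + (ν + Pi.single k 1 : ι → ℕ) j * δ) (ν + Pi.single k 1))
    (Finset.mem_univ k)).symm
  rw [← Finset.mul_prod_erase univ (fun j => PB f δ x (x j + ν j * δ) ν) (Finset.mem_univ k)]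
  refine (congrArg (· * _) e0).trans ?_
  have e1 : ∏ j ∈ univ.erase k, PB f δ x (x j + (ν + Pi.single k 1 : ι → ℕ) j * δ)
      (ν + Pi.single k 1) = (∏ j ∈ univ.erase k, f (x k + ν k * δ - (x j + ν j * δ))) *
        ∏ j ∈ univ.erase k, PB f δ x (x j + ν j * δ) ν := by
    rw [← Finset.prod_mul_distrib]
    refine Finset.prod_congr rfl fun j hj => ?_
    have hj' := (Finset.mem_erase.mp hj).1
    rw [PB_last]
    simp [Pi.single_eq_of_ne hj']
  have e2 : x k + (ν + Pi.single k 1 : ι → ℕ) k * δ = x k + ν k * δ + δ := by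
    simp; ring
  rw [e1, e2, PB_last, show x k + ν k * δ - (x k + ν k * δ + δ) = -δ by ring]
  linear_combination -(∏ j ∈ univ.erase k, f (x k + ν k * δ - (x j + ν j * δ))) *
        (∏ j ∈ univ.erase k, PB f δ x (x j + ν j * δ) ν) * hsh

/-- Effect of a last step, in direction `k`, on the summand. -/
theorem Fterm_last {f : ℂ → ℂ} (hodd : ∀ t : ℂ, f (-t) = -f t) {δ : ℂ}
    (hδ : ∀ k : ℤ, k ≠ 0 → f ((k : ℂ) * δ) ≠ 0)
    {x : ι → ℂ} (hx : ∀ i j, i ≠ j → Gen f δ (x i - x j)) {y : κ → ℂ}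
    (hxy : ∀ i k, Gen f δ (x i - y k)) (p : ρ → ℂ) (p0 : ℂ) (k : ι) (ν : ι → ℕ) :
    Fterm f δ x y p p0 (ν + Pi.single k 1) * (∏ j, f (x k + ν k * δ + δ - x j)) /
        (∏ j ∈ univ.erase k, f (x k + ν k * δ + δ - (x j + ν j * δ))) =
      - (Fterm f δ x y p p0 ν * (f (x k + ν k * δ - p0) * ∏ r, f (x k + ν k * δ - p r)) /
        ((∏ j ∈ univ.erase k, f (x k + ν k * δ - (x j + ν j * δ))) *
          ∏ i, f (x k + ν k * δ - y i))) := by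
  have hG := G_last f δ x k ν
  have hD1 := Finset.prod_ne_zero_iff.mpr
    fun j (_ : j ∈ univ) => PB_diag_ne_zero hδ hx (ν + Pi.single k 1) j
  have hD2 := Finset.prod_ne_zero_iff.mpr
    fun j (_ : j ∈ univ) => PB_diag_ne_zero hδ hx ν j
  have hE := Finset.prod_ne_zero_iff.mpr
    fun j (_ : j ∈ univ) => PB_ne_zero (fun i => hxy i j) (ν + Pi.single k 1)
  have hA : ∏ j ∈ univ.erase k, f (x j + ν j * δ - (x k + ν k * δ + δ)) ≠ 0 := by
    refine Finset.prod_ne_zero_iff.mpr fun j hj => ?_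
    have hj' := (Finset.mem_erase.mp hj).1
    exact ((hx j k hj').of_eq ((ν j : ℤ) - ν k - 1) (by push_cast; ring)).ne
  have hB : ∏ j ∈ univ.erase k, f (x k + ν k * δ - (x j + ν j * δ)) ≠ 0 := by
    refine Finset.prod_ne_zero_iff.mpr fun j hj => ?_
    have hj' := (Finset.mem_erase.mp hj).1
    exact ((hx k j hj'.symm).of_eq ((ν k : ℤ) - ν j) (by push_cast; ring)).ne
  have hcard : (-1 : ℂ) ^ (univ : Finset ι).card = - (-1) ^ (univ.erase k).card := by
    rw [← Finset.card_erase_add_one (Finset.mem_univ k), pow_succ]; ring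
  rw [prod_odd hodd univ, prod_odd hodd (univ.erase k) _ (fun j => x j + ν j * δ), hcard]
  have hs : (-1 : ℂ) ^ (univ.erase k).card ≠ 0 := pow_ne_zero _ (by norm_num)
  unfold Fterm
  simp only [PB_last, Finset.prod_mul_distrib] at hG hD1 hE ⊢
  rw [mul_ne_zero_iff] at hD1 hE
  obtain ⟨hD11, hD12⟩ := hD1
  obtain ⟨hE1, hE2⟩ := hE
  generalize ∏ j, f (x k + ν k * δ - (x j + (ν + Pi.single k 1 : ι → ℕ) j * δ)) = D11 at *
  generalize ∏ j, PB f δ x (x j + (ν + Pi.single k 1 : ι → ℕ) j * δ) ν = D12 at *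
  generalize ∏ j ∈ univ.erase k, f (x j + ν j * δ - (x k + ν k * δ + δ)) = A at *
  generalize ∏ j ∈ univ.erase k, f (x k + ν k * δ - (x j + ν j * δ)) = B at *
  generalize ∏ j, PB f δ x (x j + ν j * δ) ν = D2 at *
  generalize ∏ j, f (x j - (x k + ν k * δ + δ)) = X at *
  generalize ∏ i, f (x k + ν k * δ - y i) = E1 at *
  generalize ∏ i, PB f δ x (y i) ν = E2 at *
  generalize ∏ r, f (x k + ν k * δ - p r) = R1 at *
  generalize ∏ r, PB f δ x (p r) ν = R2 at *
  generalize f (x k + ν k * δ - p0) = P1 at *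
  generalize PB f δ x p0 ν = P2 at *
  generalize (-1 : ℂ) ^ (univ.erase k).card = sg at *
  field_simp
  linear_combination P1 * P2 * R1 * R2 * hG

/-- Recursion in `N` obtained by removing the first step of `μ`. -/
theorem Fsum_succ_first {f : ℂ → ℂ} (hf : f ≠ 0) (hodd : ∀ t : ℂ, f (-t) = -f t)
    (hdiff : Differentiable ℂ f) (hRiem : RiemannRel f) {δ : ℂ}
    (hδ : ∀ k : ℤ, k ≠ 0 → f ((k : ℂ) * δ) ≠ 0)
    {x : ι → ℂ} (hx : ∀ i j, i ≠ j → Gen f δ (x i - x j)) {y : κ → ℂ}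
    (hxy : ∀ i k, Gen f δ (x i - y k)) (p : ρ → ℂ) {p0 : ℂ} (hp0 : ∀ i, Gen f δ (x i - p0))
    (N : ℕ) :
    Fsum f δ x y p p0 (N + 1) =
      ∑ k, -((∏ r, f (x k - p r)) * f (x k - (p0 - N * δ)) /
          (f ((N + 1 : ℕ) * δ) * ((∏ l ∈ univ.erase k, f (x k - x l)) * ∏ i, f (x k - y i)))) *
        Fsum f δ (x + Pi.single k δ) y p (p0 + δ) N := by
  have hN : f ((N + 1 : ℕ) * δ) ≠ 0 := by exact_mod_cast hδ (N + 1) (by omega)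
  have hp1 : ∀ i, f (x i - (p0 + δ)) ≠ 0 := fun i =>
    ((hp0 i).of_eq (-1) (by push_cast; ring)).ne
  have hP1 : ∏ i, f (x i - (p0 + δ)) ≠ 0 := Finset.prod_ne_zero_iff.mpr fun i _ => hp1 i
  have hw1 : ∀ μ : ι → ℕ, ∏ i, f (x i + μ i * δ - (p0 + δ)) ≠ 0 := fun μ =>
    Finset.prod_ne_zero_iff.mpr fun i _ =>
      ((hp0 i).of_eq ((μ i : ℤ) - 1) (by push_cast; ring)).ne
  let g : ι → (ι → ℕ) → ℂ := fun k μ =>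
    -(Fterm f δ x y p p0 μ * (∏ i, f (x i - (p0 + δ))) *
      (∏ l, f (x k - (x l + μ l * δ))) * f (x k - (p0 - N * δ)) /
      (f ((N + 1 : ℕ) * δ) * (∏ i, f (x i + μ i * δ - (p0 + δ))) *
        ((∏ l ∈ univ.erase k, f (x k - x l)) * f (x k - (p0 + δ)))))
  have hterm : ∀ μ ∈ piAntidiag (univ : Finset ι) (N + 1),
      Fterm f δ x y p p0 μ = ∑ k, g k μ := by
    intro μ hμ
    have hμs : ∑ i, μ i = N + 1 := (mem_piAntidiag.mp hμ).1
    have hμc : ∑ i, (μ i : ℂ) = N + 1 := by exact_mod_cast hμs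
    have h := partial_fraction_option hf hodd hdiff hRiem x (fun l => x l + μ l * δ) (p0 + δ)
      (p0 - N * δ) (fun i j hij => (hx i j hij).ne) hp1 (by
        rw [Finset.sum_add_distrib, ← Finset.sum_mul, hμc]; ring)
    rw [prod_odd hodd univ (p0 + δ) (fun l => x l + μ l * δ), prod_odd hodd univ (p0 + δ) x,
      show p0 + δ - (p0 - N * δ) = (N + 1 : ℕ) * δ by push_cast; ring] at h
    have hg : ∑ k, g k μ = -(Fterm f δ x y p p0 μ * (∏ i, f (x i - (p0 + δ))) /
        (f ((N + 1 : ℕ) * δ) * ∏ i, f (x i + μ i * δ - (p0 + δ)))) *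
        ∑ i, (∏ j, f (x i - (x j + μ j * δ))) * f (x i - (p0 - N * δ)) /
        ((∏ j ∈ univ.erase i, f (x i - x j)) * f (x i - (p0 + δ))) := by
      rw [Finset.mul_sum]
      refine Finset.sum_congr rfl fun k _ => ?_
      rw [neg_mul, div_mul_div_comm]
      simp only [g]
      rw [mul_assoc (_ * _) (∏ l, f (x k - (x l + μ l * δ)))]
    rw [hg, h]
    have := hw1 μ
    have hs : (-1 : ℂ) ^ (univ : Finset ι).card ≠ 0 := pow_ne_zero _ (by norm_num)
    generalize ∏ i, f (x i + μ i * δ - (p0 + δ)) = W at *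
    generalize ∏ i, f (x i - (p0 + δ)) = X at *
    generalize f ((N + 1 : ℕ) * δ) = F at *
    field_simp
  rw [Fsum, Finset.sum_congr rfl hterm, sum_lower N g (by
    intro k μ hk
    have : ∏ l, f (x k - (x l + μ l * δ)) = 0 :=
      Finset.prod_eq_zero (Finset.mem_univ k) (by simp [hk, odd_zero hodd])
    simp only [g, this]; simp), Finset.sum_comm]
  refine Finset.sum_congr rfl fun k _ => ?_
  rw [Fsum, Finset.mul_sum]
  refine Finset.sum_congr rfl fun ν _ => ?_
  have h := Fterm_first hδ hx hxy p p0 k ν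
  have hw := hw1 (ν + Pi.single k 1)
  have hk1 := hp1 k
  have hy1 : ∏ i, f (x k - y i) ≠ 0 := Finset.prod_ne_zero_iff.mpr fun i _ => (hxy k i).ne
  have hx1 : ∏ l ∈ univ.erase k, f (x k - x l) ≠ 0 := Finset.prod_ne_zero_iff.mpr fun i hi =>
    (hx k i (Finset.mem_erase.mp hi).1.symm).ne
  simp only [g]
  generalize ∏ i, f (x i + (ν + Pi.single k 1 : ι → ℕ) i * δ - (p0 + δ)) = W at *
  generalize ∏ i, f (x i - (p0 + δ)) = X at *
  generalize ∏ i, f (x k - y i) = E at *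
  generalize ∏ l, f (x k - (x l + (ν + Pi.single k 1 : ι → ℕ) l * δ)) = V at *
  generalize ∏ l ∈ univ.erase k, f (x k - x l) = U at *
  generalize f ((N + 1 : ℕ) * δ) = F at *
  generalize f (x k - (p0 + δ)) = P at *
  generalize Fterm f δ x y p p0 (ν + Pi.single k 1) = T at *
  generalize Fterm f δ (x + Pi.single k δ) y p (p0 + δ) ν = T' at *
  generalize f (x k - (p0 - N * δ)) = Q at *
  generalize ∏ r, f (x k - p r) = R at *
  field_simp
  linear_combination -Q * h

/-- Recursion in `N` obtained by removing the last step of `μ`; the partial fraction identity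
trades the sum over the index of that step for a sum over the poles `y`. -/
theorem Fsum_succ_last {f : ℂ → ℂ} (hf : f ≠ 0) (hodd : ∀ t : ℂ, f (-t) = -f t)
    (hdiff : Differentiable ℂ f) (hRiem : RiemannRel f) {δ : ℂ}
    (hδ : ∀ k : ℤ, k ≠ 0 → f ((k : ℂ) * δ) ≠ 0)
    {x : ι → ℂ} (hx : ∀ i j, i ≠ j → Gen f δ (x i - x j)) {y : κ → ℂ}
    (hy : ∀ i j, i ≠ j → Gen f δ (y i - y j))
    (hxy : ∀ i k, Gen f δ (x i - y k)) (p : ρ → ℂ) {p0 : ℂ} (hp0 : ∀ i, Gen f δ (x i - p0))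
    (hcard : Fintype.card ρ + 1 = Fintype.card ι + Fintype.card κ)
    (hsum : ∑ r, p r + p0 = ∑ i, x i + ∑ k, y k) (N : ℕ) :
    Fsum f δ x y p p0 (N + 1) =
      ∑ k, (∏ r, f (y k - p r)) * f (y k - (p0 + N * δ)) /
          (f ((N + 1 : ℕ) * δ) * ((∏ l ∈ univ.erase k, f (y k - y l)) * ∏ i, f (y k - x i))) *
        Fsum f δ x (y - Pi.single k δ) p (p0 - δ) N := by
  have hN : f ((N + 1 : ℕ) * δ) ≠ 0 := by exact_mod_cast hδ (N + 1) (by omega)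
  have hz : ∀ (μ : ι → ℕ) i j, i ≠ j → f (x i + μ i * δ - (x j + μ j * δ)) ≠ 0 :=
    fun μ i j hij => ((hx i j hij).of_eq ((μ i : ℤ) - μ j) (by push_cast; ring)).ne
  have hzp : ∀ (μ : ι → ℕ) i, f (x i + μ i * δ - p0) ≠ 0 :=
    fun μ i => ((hp0 i).of_eq (μ i : ℤ) (by push_cast; ring)).ne
  have hzy : ∀ (μ : ι → ℕ) i k, f (x i + μ i * δ - y k) ≠ 0 :=
    fun μ i k => ((hxy i k).of_eq (μ i : ℤ) (by push_cast; ring)).ne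
  let g : ι → (ι → ℕ) → ℂ := fun k μ =>
    (Fterm f δ x y p (p0 - δ) μ * (∏ j, f (x k + μ k * δ - x j)) /
      (∏ j ∈ univ.erase k, f (x k + μ k * δ - (x j + μ j * δ)))) *
      (f (x k + μ k * δ - (p0 + (N + 1 : ℕ) * δ)) /
        (f ((N + 1 : ℕ) * δ) * f (x k + μ k * δ - p0)))
  have hterm : ∀ μ ∈ piAntidiag (univ : Finset ι) (N + 1),
      Fterm f δ x y p p0 μ = ∑ k, g k μ := by
    intro μ hμ
    have hμs : ∑ i, μ i = N + 1 := (mem_piAntidiag.mp hμ).1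
    have hμc : ∑ i, (μ i : ℂ) = N + 1 := by exact_mod_cast hμs
    have h := partial_fraction_option hf hodd hdiff hRiem (fun l => x l + μ l * δ) x p0
      (p0 + (N + 1 : ℕ) * δ) (hz μ) (hzp μ) (by
        rw [Finset.sum_add_distrib, ← Finset.sum_mul, hμc]; push_cast; ring)
    rw [prod_odd hodd univ p0 (fun l => x l + μ l * δ), prod_odd hodd univ p0 x,
      show p0 - (p0 + (N + 1 : ℕ) * δ) = -((N + 1 : ℕ) * δ) by ring, hodd] at h
    have hg : ∑ k, g k μ = Fterm f δ x y p (p0 - δ) μ / f ((N + 1 : ℕ) * δ) *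
        ∑ i, (∏ j, f (x i + μ i * δ - x j)) * f (x i + μ i * δ - (p0 + (N + 1 : ℕ) * δ)) /
        ((∏ j ∈ univ.erase i, f (x i + μ i * δ - (x j + μ j * δ))) *
          f (x i + μ i * δ - p0)) := by
      rw [Finset.mul_sum]
      refine Finset.sum_congr rfl fun k _ => ?_
      simp only [g]
      rw [div_mul_div_comm, div_mul_div_comm]
      congr 1 <;> ring
    rw [hg, h]
    have hW : ∏ i, f (x i + μ i * δ - p0) ≠ 0 := Finset.prod_ne_zero_iff.mpr fun i _ => hzp μ i
    have hX : ∏ i, f (x i - p0) ≠ 0 := Finset.prod_ne_zero_iff.mpr fun i _ => (hp0 i).ne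
    have hs : (-1 : ℂ) ^ (univ : Finset ι).card ≠ 0 := pow_ne_zero _ (by norm_num)
    have hsh := PB_shift f δ x p0 μ
    unfold Fterm
    generalize ∏ i, f (x i + μ i * δ - p0) = W at *
    generalize ∏ i, f (x i - p0) = X at *
    generalize f ((N + 1 : ℕ) * δ) = F at *
    generalize PB f δ x p0 μ = P1 at *
    generalize PB f δ x (p0 - δ) μ = P2 at *
    have hP : P1 = X * P2 / W := by field_simp; linear_combination -hsh
    rw [hP]
    generalize ∏ j, PB f δ x (x j + μ j * δ) μ = Z1
    generalize ∏ k, PB f δ x (y k) μ = Z2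
    generalize ∏ r, PB f δ x (p r) μ = Z3
    field_simp
  rw [Fsum, Finset.sum_congr rfl hterm, sum_lower N g (by
    intro k μ hk
    have : ∏ j, f (x k + μ k * δ - x j) = 0 :=
      Finset.prod_eq_zero (Finset.mem_univ k) (by simp [hk, odd_zero hodd])
    simp only [g, this]; simp)]
  simp only [Fsum, Finset.mul_sum]
  rw [Finset.sum_comm (s := univ)]
  refine Finset.sum_congr rfl fun ν hν => ?_
  have hνc : ∑ i, (ν i : ℂ) = N := by exact_mod_cast (mem_piAntidiag.mp hν).1
  have hg : ∀ k, g k (ν + Pi.single k 1) =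
      -(Fterm f δ x y p (p0 - δ) ν / f ((N + 1 : ℕ) * δ)) *
        ((∏ r, f (x k + ν k * δ - p r)) * f (x k + ν k * δ - (p0 + N * δ)) /
        ((∏ j ∈ univ.erase k, f (x k + ν k * δ - (x j + ν j * δ))) *
          ∏ i, f (x k + ν k * δ - y i))) := by
    intro k
    have e1 : x k + (ν + Pi.single k 1 : ι → ℕ) k * δ = x k + ν k * δ + δ := by
      simp; ring
    have e2 : ∏ j ∈ univ.erase k, f (x k + ν k * δ + δ -
          (x j + (ν + Pi.single k 1 : ι → ℕ) j * δ)) =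
        ∏ j ∈ univ.erase k, f (x k + ν k * δ + δ - (x j + ν j * δ)) := by
      refine Finset.prod_congr rfl fun j hj => ?_
      simp [Pi.single_eq_of_ne (Finset.mem_erase.mp hj).1]
    have hne : f (x k + ν k * δ - (p0 - δ)) ≠ 0 :=
      ((hp0 k).of_eq ((ν k : ℤ) + 1) (by push_cast; ring)).ne
    simp only [g]
    rw [e1, e2, Fterm_last hodd hδ hx hxy p (p0 - δ) k ν,
      show x k + ν k * δ + δ - (p0 + (N + 1 : ℕ) * δ) = x k + ν k * δ - (p0 + N * δ) by
        push_cast; ring,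
      show x k + ν k * δ + δ - p0 = x k + ν k * δ - (p0 - δ) by ring]
    generalize f (x k + ν k * δ - (p0 - δ)) = A at *
    generalize ∏ j ∈ univ.erase k, f (x k + ν k * δ - (x j + ν j * δ)) = B at *
    generalize ∏ i, f (x k + ν k * δ - y i) = E at *
    generalize f ((N + 1 : ℕ) * δ) = F at *
    generalize f (x k + ν k * δ - (p0 + N * δ)) = Q at *
    generalize ∏ r, f (x k + ν k * δ - p r) = R at *
    generalize Fterm f δ x y p (p0 - δ) ν = T
    rw [neg_mul, neg_mul, div_mul_div_comm, div_mul_div_comm]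
    congr 1
    rw [← mul_div_mul_left (T * _) _ hne]
    congr 1 <;> ring
  rw [Finset.sum_congr rfl fun k _ => hg k, ← Finset.mul_sum,
    partial_fraction_sum hf hodd hdiff hRiem (fun i => x i + ν i * δ) y p (p0 + N * δ) hcard
      (hz ν) (fun i j hij => (hy i j hij).ne) (hzy ν) (by
        rw [Finset.sum_add_distrib, ← Finset.sum_mul, hνc]; linear_combination hsum),
    neg_mul_neg, Finset.mul_sum]
  refine Finset.sum_congr rfl fun k _ => ?_
  -- moving the pole `y k` absorbs the factor `∏ [xᵢ + νᵢδ - y k]`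
  have hsh := PB_shift f δ x (y k) ν
  have hT : Fterm f δ x y p (p0 - δ) ν / ∏ i, f (y k - (x i + ν i * δ)) =
      Fterm f δ x (y - Pi.single k δ) p (p0 - δ) ν / ∏ i, f (y k - x i) := by
    have hX : ∏ i, f (x i - y k) ≠ 0 := Finset.prod_ne_zero_iff.mpr fun i _ => (hxy i k).ne
    have hW : ∏ i, f (x i + ν i * δ - y k) ≠ 0 :=
      Finset.prod_ne_zero_iff.mpr fun i _ => hzy ν i k
    have hs : (-1 : ℂ) ^ (univ : Finset ι).card ≠ 0 := pow_ne_zero _ (by norm_num)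
    have hP1 : PB f δ x (y k) ν ≠ 0 := PB_ne_zero (fun i => hxy i k) ν
    rw [prod_odd hodd univ (y k) (fun l => x l + ν l * δ), prod_odd hodd univ (y k) x]
    unfold Fterm
    rw [← Finset.mul_prod_erase univ (fun j => PB f δ x (y j) ν) (Finset.mem_univ k),
      ← Finset.mul_prod_erase univ (fun j => PB f δ x ((y - (Pi.single k δ : κ → ℂ)) j) ν)
      (Finset.mem_univ k)]
    have e1 : ∏ j ∈ univ.erase k, PB f δ x ((y - Pi.single k δ : κ → ℂ) j) ν =
        ∏ j ∈ univ.erase k, PB f δ x (y j) ν := by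
      refine Finset.prod_congr rfl fun j hj => ?_
      simp [Pi.single_eq_of_ne (Finset.mem_erase.mp hj).1]
    have e2 : (y - Pi.single k δ : κ → ℂ) k = y k - δ := by simp
    rw [e1, e2]
    generalize ∏ i, f (x i + ν i * δ - y k) = W at *
    generalize ∏ i, f (x i - y k) = X at *
    generalize PB f δ x (y k) ν = P1 at *
    generalize PB f δ x (y k - δ) ν = P2 at *
    have hP : P2 = P1 * W / X := by field_simp; linear_combination hsh
    rw [hP]
    generalize ∏ j ∈ univ.erase k, PB f δ x (y j) ν = Z
    generalize ∏ j, PB f δ x (x j + ν j * δ) ν = Z'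
    field_simp
  generalize ∏ i, f (y k - (x i + ν i * δ)) = W at *
  generalize ∏ i, f (y k - x i) = X at *
  generalize ∏ j ∈ univ.erase k, f (y k - y j) = B at *
  generalize f ((N + 1 : ℕ) * δ) = F at *
  rw [div_mul_div_comm, div_mul_eq_mul_div, ← mul_assoc F, ← mul_assoc F, mul_comm,
    mul_div_mul_comm, hT, ← mul_div_mul_comm]

/-- Duality: `Fsum` is symmetric under exchanging the two families `x` and `y`. -/
theorem duality {f : ℂ → ℂ} (hf : f ≠ 0) (hodd : ∀ t : ℂ, f (-t) = -f t)
    (hdiff : Differentiable ℂ f) (hRiem : RiemannRel f) {δ : ℂ}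
    (hδ : ∀ k : ℤ, k ≠ 0 → f ((k : ℂ) * δ) ≠ 0)
    {x : ι → ℂ} (hx : ∀ i j, i ≠ j → Gen f δ (x i - x j)) (p : ρ → ℂ)
    (hcard : Fintype.card ρ + 1 = Fintype.card ι + Fintype.card κ) (N : ℕ) :
    ∀ (y : κ → ℂ) (p0 : ℂ), (∀ i j, i ≠ j → Gen f δ (y i - y j)) →
      (∀ i k, Gen f δ (x i - y k)) → (∀ i, Gen f δ (x i - p0)) → (∀ k, Gen f δ (y k - p0)) →
      ∑ r, p r + p0 = ∑ i, x i + ∑ k, y k →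
      Fsum f δ x y p p0 N = Fsum f δ (-y) (-x) (-p) (-p0) N := by
  induction N with
  | zero =>
    intro y p0 _ _ _ _ _
    simp [Fsum, Fterm, PB, sf_zero]
  | succ N ih =>
    intro y p0 hy hxy hp hq hsum
    have hyn : ∀ i j, i ≠ j → Gen f δ ((-y) i - (-y) j) := fun i j hij =>
      (hy j i hij.symm).of_eq 0 (by simp; ring)
    have hyxn : ∀ i j, Gen f δ ((-y) i - (-x) j) := fun i j =>
      (hxy j i).of_eq 0 (by simp; ring)
    have hpn : ∀ i, Gen f δ ((-y) i - (-p0)) := fun i =>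
      ((hq i).neg hodd).of_eq 0 (by simp; ring)
    rw [Fsum_succ_last hf hodd hdiff hRiem hδ hx hy hxy p hp hcard hsum,
      Fsum_succ_first hf hodd hdiff hRiem hδ hyn hyxn (-p) hpn]
    refine Finset.sum_congr rfl fun k _ => ?_
    rw [ih (y - (Pi.single k δ : κ → ℂ)) (p0 - δ)]
    · rw [neg_sub', show -p0 + δ = -(p0 - δ) by ring,
        show -y - -(Pi.single k δ : κ → ℂ) = -y + Pi.single k δ by rw [sub_neg_eq_add]]
      congr 1
      have n1 : ∏ r, f ((-y) k - (-p) r) = (-1) ^ Fintype.card ρ * ∏ r, f (y k - p r) := by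
        rw [prod_odd hodd univ ((-y) k) (-p), Finset.card_univ]
        congr 1
        refine Finset.prod_congr rfl fun r _ => ?_
        congr 1; simp; ring
      have n2 : ∏ i, f ((-y) k - (-x) i) = (-1) ^ Fintype.card ι * ∏ r, f (y k - x r) := by
        rw [prod_odd hodd univ ((-y) k) (-x), Finset.card_univ]
        congr 1
        refine Finset.prod_congr rfl fun r _ => ?_
        congr 1; simp; ring
      have n3 : ∏ l ∈ univ.erase k, f ((-y) k - (-y) l) =
          (-1) ^ (univ.erase k).card * ∏ l ∈ univ.erase k, f (y k - y l) := by
        rw [prod_odd hodd (univ.erase k) ((-y) k) (-y)]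
        congr 1
        refine Finset.prod_congr rfl fun r _ => ?_
        congr 1; simp; ring
      have n4 : f ((-y) k - (-p0 - N * δ)) = - f (y k - (p0 + N * δ)) := by
        rw [← hodd]; congr 1; simp; ring
      have n5 : (-1 : ℂ) ^ Fintype.card ρ = (-1) ^ (univ.erase k).card * (-1) ^ Fintype.card ι := by
        rw [← pow_add]
        congr 1
        have := Finset.card_erase_add_one (Finset.mem_univ k)
        rw [Finset.card_univ] at this
        omega
      have hs1 : (-1 : ℂ) ^ (univ.erase k).card ≠ 0 := pow_ne_zero _ (by norm_num)
      have hs2 : (-1 : ℂ) ^ Fintype.card ι ≠ 0 := pow_ne_zero _ (by norm_num)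
      rw [n1, n2, n3, n4, n5, ← neg_div,
        ← mul_div_mul_left _ (f ((N + 1 : ℕ) * δ) * _) (mul_ne_zero hs1 hs2)]
      congr 1 <;> ring
    · intro i j hij
      by_cases hi : i = k <;> by_cases hj : j = k
      · exact absurd (hi.trans hj.symm) hij
      · refine (hy i j hij).of_eq (-1) ?_
        subst hi; simp [Pi.single_eq_of_ne hj]; ring
      · refine (hy i j hij).of_eq 1 ?_
        subst hj; simp [Pi.single_eq_of_ne hi]; ring
      · refine (hy i j hij).of_eq 0 ?_
        simp [Pi.single_eq_of_ne hi, Pi.single_eq_of_ne hj]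
    · intro i j
      by_cases hj : j = k
      · refine (hxy i j).of_eq 1 ?_
        subst hj; simp; ring
      · refine (hxy i j).of_eq 0 ?_
        simp [Pi.single_eq_of_ne hj]
    · intro i
      exact (hp i).of_eq 1 (by push_cast; ring)
    · intro j
      by_cases hj : j = k
      · refine (hq j).of_eq 0 ?_
        subst hj; simp
      · refine (hq j).of_eq 1 ?_
        simp [Pi.single_eq_of_ne hj]; ring
    · simp only [Pi.sub_apply, Finset.sum_sub_distrib, Finset.sum_pi_single', Finset.mem_univ,
        if_true]
      linear_combination hsum

end duality

/-! ### The very well-poised series as an instance of `Fsum` -/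

/-- The initial part `[δ - Nδ - z]_n` complements `[z]_M` to `[z]_N`, where `N = n + M`. -/
theorem sf_compl {f : ℂ → ℂ} (hodd : ∀ t : ℂ, f (-t) = -f t) (δ z : ℂ) {n M N : ℕ}
    (h : n + M = N) : sf f δ (δ - N * δ - z) n * sf f δ z M = (-1) ^ n * sf f δ z N := by
  subst h
  rw [add_comm n M, sf_add, show δ - ((M + n : ℕ) : ℂ) * δ - z = δ - n * δ - (z + M * δ) by
    push_cast; ring, sf_neg hodd]
  ring

/-- The factors of the summand of `Evw` that involve `w = s + xⱼ`, for `μⱼ = k` and `|μ| = M`, in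
terms of those of `Fterm`. -/
theorem sf_merge (f : ℂ → ℂ) (δ w : ℂ) (M N k : ℕ) :
    sf f δ w M * f (w + ((M + k : ℕ) : ℂ) * δ) * sf f δ (w + M * δ) k *
        sf f δ (w + δ + k * δ) N =
      f w * sf f δ (w + δ) N * sf f δ (w + δ + N * δ) k * sf f δ (w + δ + k * δ) M := by
  have e1 := sf_add f δ w M k
  have e2 := sf_shift f δ w (M + k)
  have e3 := sf_add f δ (w + δ) k M
  have e4 := sf_add f δ (w + δ) k N
  have e5 := sf_add f δ (w + δ) N k
  rw [add_comm k M] at e3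
  rw [add_comm k N] at e4
  linear_combination -(f (w + ((M + k : ℕ) : ℂ) * δ) * sf f δ (w + δ + k * δ) N) * e1
    - sf f δ (w + δ + k * δ) N * e2 + sf f δ (w + δ + k * δ) N * f w * e3
    + f w * sf f δ (w + δ + k * δ) M * (e5 - e4)

theorem sf_pair {f : ℂ → ℂ} (hodd : ∀ t : ℂ, f (-t) = -f t) (δ z : ℂ) (p q : ℕ) :
    f (z + p * δ - q * δ) * (sf f δ (z - q * δ) p * sf f δ (-z - p * δ) q) =
      f z * (sf f δ (z + δ) p * sf f δ (-z + δ) q) := by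
  have r1 := sf_neg hodd δ (z - q * δ) q
  have r2 := sf_neg hodd δ (z + p * δ - q * δ + δ) q
  rw [show δ - q * δ - (z - q * δ) = -z + δ by ring] at r1
  rw [show δ - q * δ - (z + p * δ - q * δ + δ) = -z - p * δ by ring] at r2
  have a1 := sf_add f δ (z - q * δ) p (q + 1)
  have a2 := sf_add f δ (z - q * δ) q (p + 1)
  rw [show p + (q + 1) = q + (p + 1) by ring, a2, sf_succ', sf_succ',
    show z - q * δ + q * δ = z by ring,
    show z - q * δ + p * δ = z + p * δ - q * δ by ring] at a1
  rw [r1, r2]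
  linear_combination -(-1) ^ q * a1

theorem prod_pairs {m : ℕ} (g : Fin m → Fin m → ℂ) :
    ∏ i, ∏ j, g i j =
      (∏ i, g i i) * ∏ i, ∏ j ∈ univ.filter (fun j => i < j), (g i j * g j i) := by
  have h := Finset.prod_prod_Ioi_mul_eq_prod_prod_off_diag (fun i j => g j i)
  have h1 : ∀ i : Fin m, univ.filter (fun j => i < j) = Finset.Ioi i := fun i => by ext; simp
  simp only [h1]
  rw [h, ← Finset.prod_mul_distrib]
  refine Finset.prod_congr rfl fun i _ => ?_
  rw [Finset.compl_singleton, Finset.mul_prod_erase univ (g i) (Finset.mem_univ i)]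

/-- The ratio of difference products rewrites the denominators `[xᵢ - xⱼ + δ]_{μᵢ}`. -/
theorem Del_prod {f : ℂ → ℂ} (hodd : ∀ t : ℂ, f (-t) = -f t) (δ : ℂ) {m : ℕ} (x : Fin m → ℂ)
    (μ : Fin m → ℕ) :
    Del f (fun i => x i + (μ i : ℂ) * δ) * ∏ j, ∏ i, sf f δ (x i - (x j + μ j * δ)) (μ i) =
      (-1) ^ (∑ i, μ i) * Del f x * ∏ j, ∏ i, sf f δ (x i - x j + δ) (μ i) := by
  rw [Finset.prod_comm, prod_pairs, Finset.prod_comm, prod_pairs, Del, Del,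
    ← Finset.prod_pow_eq_pow_sum]
  have d : ∏ i, sf f δ (x i - (x i + μ i * δ)) (μ i) =
      (∏ i, (-1) ^ μ i) * ∏ i, sf f δ (x i - x i + δ) (μ i) := by
    rw [← Finset.prod_mul_distrib]
    refine Finset.prod_congr rfl fun i _ => ?_
    rw [← sf_neg hodd]; congr 1; ring
  have o : (∏ i, ∏ j ∈ univ.filter (fun j => i < j), f (x i + μ i * δ - (x j + μ j * δ))) *
      (∏ i, ∏ j ∈ univ.filter (fun j => i < j),
        (sf f δ (x i - (x j + μ j * δ)) (μ i) * sf f δ (x j - (x i + μ i * δ)) (μ j))) =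
      (∏ i, ∏ j ∈ univ.filter (fun j => i < j), f (x i - x j)) *
      (∏ i, ∏ j ∈ univ.filter (fun j => i < j),
        (sf f δ (x i - x j + δ) (μ i) * sf f δ (x j - x i + δ) (μ j))) := by
    simp only [← Finset.prod_mul_distrib]
    refine Finset.prod_congr rfl fun i _ => Finset.prod_congr rfl fun j _ => ?_
    have := sf_pair hodd δ (x i - x j) (μ i) (μ j)
    convert this using 3 <;> ring_nf
  rw [d]
  linear_combination ((∏ i, (-1) ^ μ i) * ∏ i, sf f δ (x i - x i + δ) (μ i)) * o

/-- The constant relating the summands of `Evw` and `Fsum`. -/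
noncomputable def Kc (f : ℂ → ℂ) (δ : ℂ) {m : ℕ} (a x : Fin m → ℂ) (s c0 c1 c2 d0 d1 : ℂ)
    (N : ℕ) : ℂ :=
  (∏ j, sf f δ (δ + s + x j - a j) N) * sf f δ (δ + s - c0) N * sf f δ (δ + s - c1) N *
      sf f δ (δ + s - c2) N /
    (sf f δ δ N * (∏ j, sf f δ (δ + s + x j) N) * sf f δ d0 N * sf f δ d1 N)

/-- The points `xᵢ` of the very well-poised series together with the extra point `-s - Nδ`. -/
noncomputable def xx (δ : ℂ) {m : ℕ} (x : Fin m → ℂ) (s : ℂ) (N : ℕ) : Option (Fin m) → ℂ :=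
  fun o => o.elim (-s - N * δ) x

/-- The zeros attached to the parameters `aⱼ`, `c₀` and `c₁`. -/
noncomputable def pp {m : ℕ} (a x : Fin m → ℂ) (c0 c1 : ℂ) : Fin m ⊕ Fin 2 → ℂ :=
  Sum.elim (fun j => x j - a j) ![-c0, -c1]

/-- The poles attached to the parameters `d₀` and `d₁`. -/
noncomputable def yy (δ s d0 d1 : ℂ) : Fin 2 → ℂ := ![d0 - δ - s, d1 - δ - s]

theorem PB_xx (f : ℂ → ℂ) (δ : ℂ) {m : ℕ} (x : Fin m → ℂ) (s : ℂ) (N : ℕ) (c : ℂ)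
    (ν : Option (Fin m) → ℕ) :
    PB f δ (xx δ x s N) c ν =
      sf f δ (-s - N * δ - c) (ν none) * ∏ i, sf f δ (x i - c) (ν (some i)) := by
  rw [PB, Fintype.prod_option]; rfl

/-- With the extra point, of multiplicity `N - |μ|`, the summands of `Fsum` are those of `Evw` up to
the constant `Kc`. -/
theorem Fterm_eq {f : ℂ → ℂ} (hodd : ∀ t : ℂ, f (-t) = -f t) {δ : ℂ}
    (hδ : ∀ k : ℤ, k ≠ 0 → f ((k : ℂ) * δ) ≠ 0) {m N : ℕ} {a x : Fin m → ℂ}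
    {s c0 c1 c2 d0 d1 : ℂ}
    (hx : ∀ i j, i ≠ j → Gen f δ (x i - x j)) (hs : ∀ i, Gen f δ (x i + s))
    (hd0 : Gen f δ d0) (hd1 : Gen f δ d1) (ha : ∀ j, Gen f δ (s + x j - a j))
    (hc0 : Gen f δ (s - c0)) (hc1 : Gen f δ (s - c1)) (hc2 : Gen f δ (s - c2))
    (hxd0 : ∀ i, Gen f δ (x i + s - d0)) (hxd1 : ∀ i, Gen f δ (x i + s - d1))
    (ν : Option (Fin m) → ℕ) (hν : ∑ o, ν o = N) :
    Fterm f δ (xx δ x s N) (yy δ s d0 d1) (pp a x c0 c1) (-c2) ν =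
      Kc f δ a x s c0 c1 c2 d0 d1 N *
        Eterm f δ a x s ![c0, c1, c2] ![d0, d1, -(N : ℂ) * δ] (fun i => ν (some i)) := by
  obtain ⟨μ, hμ⟩ : ∃ μ : Fin m → ℕ, μ = fun i => ν (some i) := ⟨_, rfl⟩
  obtain ⟨n, hn⟩ : ∃ n, n = ν none := ⟨_, rfl⟩
  obtain ⟨M, hM⟩ : ∃ M, M = ∑ i, μ i := ⟨_, rfl⟩
  have hnM : n + M = N := by
    rw [← hν, Fintype.sum_option, hM, hn, hμ]
  have hμi : ∀ i, ν (some i) = μ i := fun i => by rw [hμ]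
  have hNc : (N : ℂ) = n + M := by exact_mod_cast hnM.symm
  simp only [Fterm, PB_xx, Fintype.prod_sum_type, Fintype.prod_option, Fin.prod_univ_two,
    Fin.prod_univ_three, Eterm, pp, yy, Sum.elim_inl, Sum.elim_inr, xx, Option.elim, hμi, ← hn,
    ← hM, Matrix.cons_val_zero, Matrix.cons_val_one, Matrix.cons_val,
    Finset.prod_mul_distrib, Finset.prod_div_distrib, Kc]
  -- the factors attached to the extra point
  have c0f := sf_compl hodd δ (δ + s - c0) hnM
  have c1f := sf_compl hodd δ (δ + s - c1) hnM
  have c2f := sf_compl hodd δ (δ + s - c2) hnM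
  have d0f := sf_compl hodd δ d0 hnM
  have d1f := sf_compl hodd δ d1 hnM
  have qf := sf_compl hodd δ δ ((add_comm M n).trans hnM)
  have qn := sf_neg hodd δ δ n
  have af : (∏ j, sf f δ (-s - N * δ - (x j - a j)) n) * ∏ j, sf f δ (δ + s + x j - a j) M =
      (∏ j : Fin m, (-1) ^ n) * ∏ j, sf f δ (δ + s + x j - a j) N := by
    simp only [← Finset.prod_mul_distrib]
    refine Finset.prod_congr rfl fun j _ => ?_
    rw [← sf_compl hodd δ _ hnM]; congr 2; ring
  have Rf : (∏ j, sf f δ (-s - N * δ - (x j + μ j * δ)) n) *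
      ∏ j, sf f δ (s + x j + δ + μ j * δ) M =
      (∏ j : Fin m, (-1) ^ n) * ∏ j, sf f δ (s + x j + δ + μ j * δ) N := by
    simp only [← Finset.prod_mul_distrib]
    refine Finset.prod_congr rfl fun j _ => ?_
    rw [← sf_compl hodd δ _ hnM]; congr 2; ring
  have Bf : (∏ j, sf f δ (s + x j) M) * (∏ j, f (x j + s + ((M + μ j : ℕ) : ℂ) * δ)) *
      (∏ j, sf f δ (x j - (-s - N * δ + n * δ)) (μ j)) *
      (∏ j, sf f δ (s + x j + δ + μ j * δ) N) = (∏ j, f (x j + s)) *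
      (∏ j, sf f δ (δ + s + x j) N) * (∏ j, sf f δ (x j + δ + s - -N * δ) (μ j)) *
      (∏ j, sf f δ (s + x j + δ + μ j * δ) M) := by
    simp only [← Finset.prod_mul_distrib]
    refine Finset.prod_congr rfl fun j _ => ?_
    have := sf_merge f δ (s + x j) M N (μ j)
    convert this using 3
    · congr 2; ring
    · congr 1; rw [hNc]; ring
    · congr 1
      · ring_nf
      · ring_nf
    · ring_nf
  have Df := Del_prod hodd δ x μ
  rw [← hM] at Df
  rw [show δ - N * δ - (δ + s - c0) = -s - N * δ - -c0 by ring] at c0f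
  rw [show δ - N * δ - (δ + s - c1) = -s - N * δ - -c1 by ring] at c1f
  rw [show δ - N * δ - (δ + s - c2) = -s - N * δ - -c2 by ring] at c2f
  rw [show δ - N * δ - d0 = -s - N * δ - (d0 - δ - s) by ring] at d0f
  rw [show δ - N * δ - d1 = -s - N * δ - (d1 - δ - s) by ring] at d1f
  rw [show δ - N * δ - δ = -N * δ by ring] at qf
  rw [show δ - n * δ - δ = -s - N * δ - (-s - N * δ + n * δ) by ring] at qn
  have g0 : ∀ i, sf f δ (x i - -c0) (μ i) = sf f δ (x i + c0) (μ i) := fun i => by congr 1; ring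
  have g1 : ∀ i, sf f δ (x i - -c1) (μ i) = sf f δ (x i + c1) (μ i) := fun i => by congr 1; ring
  have g2 : ∀ i, sf f δ (x i - -c2) (μ i) = sf f δ (x i + c2) (μ i) := fun i => by congr 1; ring
  have g3 : ∀ i, sf f δ (x i - (d0 - δ - s)) (μ i) = sf f δ (x i + δ + s - d0) (μ i) :=
    fun i => by congr 1; ring
  have g4 : ∀ i, sf f δ (x i - (d1 - δ - s)) (μ i) = sf f δ (x i + δ + s - d1) (μ i) :=
    fun i => by congr 1; ring
  have g5 : ∀ i j, sf f δ (x i - (x j - a j)) (μ i) = sf f δ (x i - x j + a j) (μ i) :=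
    fun i j => by congr 1; ring
  simp only [g0, g1, g2, g3, g4, g5]
  have pr : ∀ {J : Type} [Fintype J] (g : J → ℂ), (∀ j, g j ≠ 0) → ∏ j, g j ≠ 0 :=
    fun g hg => Finset.prod_ne_zero_iff.mpr fun j _ => hg j
  have n1 : sf f δ (δ + s - c0) M ≠ 0 := (hc0.of_eq 1 (by push_cast; ring)).sf_ne _
  have n2 : sf f δ (δ + s - c1) M ≠ 0 := (hc1.of_eq 1 (by push_cast; ring)).sf_ne _
  have n3 : sf f δ (δ + s - c2) M ≠ 0 := (hc2.of_eq 1 (by push_cast; ring)).sf_ne _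
  have n4 := hd0.sf_ne M
  have n4' := hd0.sf_ne N
  have n5 := hd1.sf_ne M
  have n5' := hd1.sf_ne N
  have n6 : sf f δ (-N * δ) M ≠ 0 := sf_ne_zero fun l hl => by
    have := hδ ((l : ℤ) - N) (by omega)
    convert this using 2; push_cast; ring
  have n7 : ∀ k, sf f δ δ k ≠ 0 := fun k => sf_ne_zero fun l hl => by
    have := hδ ((l : ℤ) + 1) (by omega)
    convert this using 2; push_cast; ring
  have n7N := n7 N
  have n7n := n7 n
  have n8 : ∏ j, sf f δ (δ + s + x j - a j) M ≠ 0 := pr _ fun j =>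
    ((ha j).of_eq 1 (by push_cast; ring)).sf_ne _
  have n9 : ∏ j, sf f δ (s + x j + δ + μ j * δ) M ≠ 0 := pr _ fun j =>
    ((hs j).of_eq (1 + μ j) (by push_cast; ring)).sf_ne _
  have n10 : ∏ j, sf f δ (s + x j) M ≠ 0 := pr _ fun j =>
    ((hs j).of_eq 0 (by push_cast; ring)).sf_ne _
  have n11 : ∏ j, f (x j + s + ((M + μ j : ℕ) : ℂ) * δ) ≠ 0 := pr _ fun j =>
    ((hs j).of_eq (M + μ j) (by push_cast; ring)).ne
  have n12 : ∏ j, sf f δ (x j - (-s - N * δ + n * δ)) (μ j) ≠ 0 := pr _ fun j =>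
    ((hs j).of_eq (N - n) (by push_cast; ring)).sf_ne _
  have n13 : ∏ j, f (x j + s) ≠ 0 := pr _ fun j => (hs j).ne
  have n14 : ∏ j, sf f δ (δ + s + x j) N ≠ 0 := pr _ fun j =>
    ((hs j).of_eq 1 (by push_cast; ring)).sf_ne _
  have n15 : ∏ j, sf f δ (x j + δ + s - -N * δ) (μ j) ≠ 0 := pr _ fun j =>
    ((hs j).of_eq (1 + N) (by push_cast; ring)).sf_ne _
  have n16 : Del f x ≠ 0 := pr _ fun i => Finset.prod_ne_zero_iff.mpr fun j hj =>
    (hx i j (Finset.mem_filter.mp hj).2.ne).ne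
  have n17 : Del f (fun i => x i + (μ i : ℂ) * δ) ≠ 0 :=
    pr _ fun i => Finset.prod_ne_zero_iff.mpr fun j hj =>
      ((hx i j (Finset.mem_filter.mp hj).2.ne).of_eq (μ i - μ j) (by push_cast; ring)).ne
  have n18 : ∏ j, ∏ i, sf f δ (x i - x j + δ) (μ i) ≠ 0 := pr _ fun j => pr _ fun i => by
    by_cases hij : i = j
    · subst hij; rw [sub_self, zero_add]; exact n7 _
    · exact ((hx i j hij).of_eq 1 (by push_cast; ring)).sf_ne _
  have n19 : ∏ i, sf f δ (x i + δ + s - d0) (μ i) ≠ 0 := pr _ fun j =>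
    ((hxd0 j).of_eq 1 (by push_cast; ring)).sf_ne _
  have n20 : ∏ i, sf f δ (x i + δ + s - d1) (μ i) ≠ 0 := pr _ fun j =>
    ((hxd1 j).of_eq 1 (by push_cast; ring)).sf_ne _
  have e1 : ((-1 : ℂ) ^ n) ≠ 0 := pow_ne_zero _ (by norm_num)
  have e2 : (∏ j : Fin m, (-1 : ℂ) ^ n) ≠ 0 := pr _ fun _ => e1
  have e3 : ((-1 : ℂ) ^ M) * (-1) ^ M = 1 := by rw [← mul_pow]; norm_num
  have e4 : ((-1 : ℂ) ^ M) ≠ 0 := pow_ne_zero _ (by norm_num)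
  generalize (-1 : ℂ) ^ M = ε at *
  generalize ∏ j : Fin m, (-1 : ℂ) ^ n = η at *
  generalize (-1 : ℂ) ^ n = e at *
  rw [mul_comm] at qf Bf Df
  rw [eq_div_of_mul_eq n1 c0f, eq_div_of_mul_eq n2 c1f, eq_div_of_mul_eq n3 c2f,
    eq_div_of_mul_eq n4 d0f, eq_div_of_mul_eq n5 d1f, eq_div_of_mul_eq n8 af,
    eq_div_of_mul_eq n9 Rf, qn, eq_div_of_mul_eq n6 qf,
    eq_div_of_mul_eq (mul_ne_zero (mul_ne_zero n10 n11) n12) Bf,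
    eq_div_of_mul_eq n17 Df]
  clear c0f c1f c2f d0f d1f af Rf qn qf Bf Df pr g0 g1 g2 g3 g4 g5 n7 n7n
  generalize sf f δ (δ + s - c0) M = A1 at *
  generalize sf f δ (δ + s - c1) M = A2 at *
  generalize sf f δ (δ + s - c2) M = A3 at *
  generalize sf f δ d0 M = A4 at *
  generalize sf f δ d1 M = A5 at *
  generalize sf f δ d0 N = A6 at *
  generalize sf f δ d1 N = A7 at *
  generalize sf f δ (-N * δ) M = A8 at *
  generalize sf f δ δ N = A9 at *
  generalize ∏ j, sf f δ (δ + s + x j - a j) M = B1 at *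
  generalize ∏ j, sf f δ (δ + s + x j - a j) N = B2 at *
  generalize ∏ j, sf f δ (s + x j + δ + μ j * δ) M = B3 at *
  generalize ∏ j, sf f δ (s + x j) M = B4 at *
  generalize ∏ j, f (x j + s + ((M + μ j : ℕ) : ℂ) * δ) = B5 at *
  generalize ∏ j, sf f δ (x j - (-s - N * δ + n * δ)) (μ j) = B6 at *
  generalize ∏ j, f (x j + s) = B7 at *
  generalize ∏ j, sf f δ (δ + s + x j) N = B8 at *
  generalize ∏ j, sf f δ (x j + δ + s - -N * δ) (μ j) = B9 at *
  generalize Del f x = C1 at *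
  generalize Del f (fun i => x i + (μ i : ℂ) * δ) = C2 at *
  generalize ∏ j, ∏ i, sf f δ (x i - x j + δ) (μ i) = C3 at *
  generalize ∏ j, ∏ i, sf f δ (x i - x j + a j) (μ i) = C4 at *
  generalize ∏ i, sf f δ (x i + δ + s - d0) (μ i) = C5 at *
  generalize ∏ i, sf f δ (x i + δ + s - d1) (μ i) = C6 at *
  generalize ∏ i, sf f δ (x i + c0) (μ i) = C7 at *
  generalize ∏ i, sf f δ (x i + c1) (μ i) = C8 at *
  generalize ∏ i, sf f δ (x i + c2) (μ i) = C9 at *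
  generalize sf f δ (δ + s - c0) N = D1 at *
  generalize sf f δ (δ + s - c1) N = D2 at *
  generalize sf f δ (δ + s - c2) N = D3 at *
  field_simp
  linear_combination -(D3 * C9 * B2 * D1 * D2 * C4 * C7 * C8) * e3

/-- The series terminates; its index set is parametrized by multi-indices of total weight `N`
in one more variable. -/
theorem Evw_eq_sum {f : ℂ → ℂ} (hodd : ∀ t : ℂ, f (-t) = -f t) (δ : ℂ) {m : ℕ} (N : ℕ)
    (a x : Fin m → ℂ) (s : ℂ) (u : Fin 3 → ℂ) (d0 d1 : ℂ) :
    Evw f δ a x s u ![d0, d1, -(N : ℂ) * δ] =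
      ∑ ν ∈ piAntidiag (univ : Finset (Option (Fin m))) N,
        Eterm f δ a x s u ![d0, d1, -(N : ℂ) * δ] (fun i => ν (some i)) := by
  classical
  have hinj : Set.InjOn (fun (ν : Option (Fin m) → ℕ) (i : Fin m) => ν (some i))
      (piAntidiag (univ : Finset (Option (Fin m))) N) := by
    intro ν hν ν' hν' h
    have h1 := (mem_piAntidiag.mp (Finset.mem_coe.mp hν)).1
    have h2 := (mem_piAntidiag.mp (Finset.mem_coe.mp hν')).1
    rw [Fintype.sum_option] at h1 h2
    have h3 : ∀ i, ν (some i) = ν' (some i) := fun i => congrFun h i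
    funext o
    cases o with
    | some i => exact h3 i
    | none => simp only [h3] at h1; omega
  rw [Evw, ← Finset.sum_image hinj]
  refine tsum_eq_sum fun μ hμ => ?_
  have hM : N < ∑ i, μ i := by
    by_contra hle
    apply hμ
    refine Finset.mem_image.mpr ⟨fun o => o.elim (N - ∑ i, μ i) μ, ?_, rfl⟩
    rw [mem_piAntidiag]
    refine ⟨?_, fun _ _ => Finset.mem_univ _⟩
    rw [Fintype.sum_option]
    simp only [Option.elim]
    omega
  have h0 : sf f δ (-(N : ℂ) * δ) (∑ i, μ i) = 0 :=
    Finset.prod_eq_zero (Finset.mem_range.mpr hM) (by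
      rw [show -(N : ℂ) * δ + N * δ = 0 by ring, odd_zero hodd])
  rw [Eterm, Fin.prod_univ_three]
  simp only [Matrix.cons_val, h0, zero_div, zero_mul, mul_zero]

/-- The dual of the terminating balanced series: a sum over two-component multi-indices. -/
theorem Evw_dual {f : ℂ → ℂ} (hf : f ≠ 0) (hodd : ∀ t : ℂ, f (-t) = -f t)
    (hdiff : Differentiable ℂ f) (hRiem : RiemannRel f) {δ : ℂ}
    (hδ : ∀ k : ℤ, k ≠ 0 → f ((k : ℂ) * δ) ≠ 0) {m N : ℕ} {a x : Fin m → ℂ}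
    {s c0 c1 c2 d0 d1 : ℂ}
    (hbal : (∑ i, a i) + (c0 + c1 + c2 + d0 + d1 + -(N : ℂ) * δ) = 2 * δ + 3 * s)
    (hx : ∀ i j, i ≠ j → Gen f δ (x i - x j)) (hs : ∀ i, Gen f δ (x i + s))
    (hd0 : Gen f δ d0) (hd1 : Gen f δ d1) (ha : ∀ j, Gen f δ (s + x j - a j))
    (hc0 : Gen f δ (s - c0)) (hc1 : Gen f δ (s - c1)) (hc2 : Gen f δ (s - c2))
    (hxd0 : ∀ i, Gen f δ (x i + s - d0)) (hxd1 : ∀ i, Gen f δ (x i + s - d1))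
    (hd01 : Gen f δ (d0 - d1)) (hxc : ∀ i, Gen f δ (x i + c2))
    (hdc0 : Gen f δ (s - c2 - d0)) (hdc1 : Gen f δ (s - c2 - d1)) :
    Kc f δ a x s c0 c1 c2 d0 d1 N * Evw f δ a x s ![c0, c1, c2] ![d0, d1, -(N : ℂ) * δ] =
      Fsum f δ (-yy δ s d0 d1) (-xx δ x s N) (-pp a x c0 c1) c2 N := by
  have h := duality hf hodd hdiff hRiem hδ (x := xx δ x s N) (by
      intro i j hij
      cases i with
      | none =>
        cases j with
        | none => exact absurd rfl hij
        | some j => exact ((hs j).neg hodd).of_eq (-N) (by simp [xx]; ring)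
      | some i =>
        cases j with
        | none => exact (hs i).of_eq N (by simp [xx]; ring)
        | some j => exact hx i j fun e => hij (by rw [e])) (pp a x c0 c1) (κ := Fin 2)
      (by simp) N (yy δ s d0 d1) (-c2) (by
        intro i j hij
        fin_cases i <;> fin_cases j
        · exact absurd rfl hij
        · exact hd01.of_eq 0 (by simp [yy])
        · exact (hd01.neg hodd).of_eq 0 (by simp [yy])
        · exact absurd rfl hij) (by
        intro i k
        cases i with
        | none =>
          fin_cases k
          · exact (hd0.neg hodd).of_eq (1 - N) (by simp [yy, xx]; ring)
          · exact (hd1.neg hodd).of_eq (1 - N) (by simp [yy, xx]; ring)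
        | some i =>
          fin_cases k
          · exact (hxd0 i).of_eq 1 (by simp [yy, xx]; ring)
          · exact (hxd1 i).of_eq 1 (by simp [yy, xx]; ring)) (by
        intro i
        cases i with
        | none => exact (hc2.neg hodd).of_eq (-N) (by simp [xx]; ring)
        | some i => exact (hxc i).of_eq 0 (by simp [xx])) (by
        intro k
        fin_cases k
        · exact (hdc0.neg hodd).of_eq (-1) (by simp [yy]; ring)
        · exact (hdc1.neg hodd).of_eq (-1) (by simp [yy]; ring)) (by
        simp only [pp, xx, yy, Fintype.sum_sum_type, Fintype.sum_option, Fin.sum_univ_two,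
          Sum.elim_inl, Sum.elim_inr, Option.elim, Finset.sum_sub_distrib,
          Matrix.cons_val_zero, Matrix.cons_val_one]
        linear_combination -hbal)
  rw [neg_neg] at h
  rw [← h, Evw_eq_sum hodd, Finset.mul_sum, Fsum]
  refine Finset.sum_congr rfl fun ν hν => ?_
  exact (Fterm_eq hodd hδ hx hs hd0 hd1 ha hc0 hc1 hc2 hxd0 hxd1 ν
    (mem_piAntidiag.mp hν).1).symm

/-- On the dual side passing to the tilded parameters fixes the points, because
`st - d0t = s - d0` and `st - d1t = s - d1`, and rescales every summand by a common constant. -/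
theorem Fsum_swap {f : ℂ → ℂ} (hodd : ∀ t : ℂ, f (-t) = -f t) {δ : ℂ} {m : ℕ} (N : ℕ)
    (a x : Fin m → ℂ) (s c0 c1 c2 d0 d1 st c2t d0t d1t : ℂ)
    (hst : st = δ + 2 * s - c2 - d0 - d1) (hc2t : c2t = δ + s - d0 - d1)
    (hd0t : d0t = δ + s - c2 - d1) (hd1t : d1t = δ + s - c2 - d0)
    (hd0 : Gen f δ d0) (hd1 : Gen f δ d1) (gd0t : Gen f δ d0t) (gd1t : Gen f δ d1t) :
    sf f δ d0t N * sf f δ d1t N *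
        Fsum f δ (-yy δ st d0t d1t) (-xx δ x st N) (-pp a x c0 c1) c2t N =
      sf f δ d0 N * sf f δ d1 N *
        Fsum f δ (-yy δ s d0 d1) (-xx δ x s N) (-pp a x c0 c1) c2 N := by
  have hy : yy δ st d0t d1t = yy δ s d0 d1 := by
    funext k
    fin_cases k <;> simp [yy, hst, hd0t, hd1t] <;> ring
  rw [hy, Fsum, Fsum, Finset.mul_sum, Finset.mul_sum]
  refine Finset.sum_congr rfl fun κ hκ => ?_
  have hκs : κ 0 + κ 1 = N := by
    rw [← Fin.sum_univ_two]; exact (mem_piAntidiag.mp hκ).1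
  have hPB : ∀ c, PB f δ (-yy δ s d0 d1) c κ =
      sf f δ (δ + s - d0 - c) (κ 0) * sf f δ (δ + s - d1 - c) (κ 1) := by
    intro c
    rw [PB, Fin.prod_univ_two]
    congr 2 <;> simp [yy] <;> ring
  rw [Fterm, Fterm, Fintype.prod_option, Fintype.prod_option]
  have hsome : ∀ i : Fin m, (-xx δ x st N) (some i) = (-xx δ x s N) (some i) := fun i => rfl
  simp only [hsome]
  rw [hPB c2, hPB c2t, hPB ((-xx δ x s N) none), hPB ((-xx δ x st N) none)]
  have r0 := sf_compl hodd δ d0 hκs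
  have r1 := sf_compl hodd δ d1 ((add_comm _ _).trans hκs)
  have r0t := sf_compl hodd δ d0t hκs
  have r1t := sf_compl hodd δ d1t ((add_comm _ _).trans hκs)
  rw [show δ + s - d0 - (-xx δ x s N) none = δ - N * δ - d0 by simp [xx]; ring,
    show δ + s - d1 - (-xx δ x s N) none = δ - N * δ - d1 by simp [xx]; ring,
    show δ + s - d0 - (-xx δ x st N) none = δ - N * δ - d0t by simp [xx, hst, hd0t]; ring,
    show δ + s - d1 - (-xx δ x st N) none = δ - N * δ - d1t by simp [xx, hst, hd1t]; ring,
    show δ + s - d0 - c2 = d1t by rw [hd1t]; ring,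
    show δ + s - d1 - c2 = d0t by rw [hd0t]; ring,
    show δ + s - d0 - c2t = d1 by rw [hc2t]; ring,
    show δ + s - d1 - c2t = d0 by rw [hc2t]; ring]
  have n0 : sf f δ (δ - N * δ - d0) (κ 0) ≠ 0 :=
    ((hd0.neg hodd).of_eq (1 - N) (by push_cast; ring)).sf_ne _
  have n1 : sf f δ (δ - N * δ - d1) (κ 1) ≠ 0 :=
    ((hd1.neg hodd).of_eq (1 - N) (by push_cast; ring)).sf_ne _
  have n0t : sf f δ (δ - N * δ - d0t) (κ 0) ≠ 0 :=
    ((gd0t.neg hodd).of_eq (1 - N) (by push_cast; ring)).sf_ne _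
  have n1t : sf f δ (δ - N * δ - d1t) (κ 1) ≠ 0 :=
    ((gd1t.neg hodd).of_eq (1 - N) (by push_cast; ring)).sf_ne _
  have s0 : (-1 : ℂ) ^ κ 0 ≠ 0 := pow_ne_zero _ (by norm_num)
  have s1 : (-1 : ℂ) ^ κ 1 ≠ 0 := pow_ne_zero _ (by norm_num)
  rw [mul_comm] at r0 r1 r0t r1t
  rw [eq_div_of_mul_eq n0 r0, eq_div_of_mul_eq n1 r1, eq_div_of_mul_eq n0t r0t,
    eq_div_of_mul_eq n1t r1t]
  generalize ∏ i, PB f δ (-yy δ s d0 d1) ((-xx δ x s N) (some i)) κ = Z1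
  generalize ∏ r, PB f δ (-yy δ s d0 d1) ((-pp a x c0 c1) r) κ = Z2
  generalize ∏ j, PB f δ (-yy δ s d0 d1) ((-yy δ s d0 d1) j + κ j * δ) κ = Z3
  clear r0 r1 r0t r1t hPB
  generalize sf f δ (δ - N * δ - d0) (κ 0) = A0 at *
  generalize sf f δ (δ - N * δ - d1) (κ 1) = A1 at *
  generalize sf f δ (δ - N * δ - d0t) (κ 0) = A2 at *
  generalize sf f δ (δ - N * δ - d1t) (κ 1) = A3 at *
  generalize (-1 : ℂ) ^ κ 0 = e0 at *
  generalize (-1 : ℂ) ^ κ 1 = e1 at *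
  generalize sf f δ d0 N = D0 at *
  generalize sf f δ d1 N = D1 at *
  generalize sf f δ d0t N = D2 at *
  generalize sf f δ d1t N = D3 at *
  field_simp

/-- The transformation for parameters such that no relevant bracket vanishes. -/
theorem bailey_generic {f : ℂ → ℂ} (hf : f ≠ 0) (hodd : ∀ t : ℂ, f (-t) = -f t)
    (hdiff : Differentiable ℂ f) (hRiem : RiemannRel f) {δ : ℂ}
    (hδ : ∀ k : ℤ, k ≠ 0 → f ((k : ℂ) * δ) ≠ 0) {m N : ℕ} {a x : Fin m → ℂ}
    {s c0 c1 c2 d0 d1 st c2t d0t d1t : ℂ}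
    (hbal : (∑ i, a i) + (c0 + c1 + c2 + d0 + d1 + -(N : ℂ) * δ) = 2 * δ + 3 * s)
    (hst : st = δ + 2 * s - c2 - d0 - d1) (hc2t : c2t = δ + s - d0 - d1)
    (hd0t : d0t = δ + s - c2 - d1) (hd1t : d1t = δ + s - c2 - d0)
    (hx : ∀ i j, i ≠ j → Gen f δ (x i - x j))
    (hs : ∀ i, Gen f δ (x i + s)) (hs' : ∀ i, Gen f δ (x i + st))
    (hd0 : Gen f δ d0) (hd1 : Gen f δ d1) (hd01 : Gen f δ (d0 - d1))
    (ha : ∀ j, Gen f δ (s + x j - a j)) (ha' : ∀ j, Gen f δ (st + x j - a j))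
    (hc0 : Gen f δ (s - c0)) (hc0' : Gen f δ (st - c0))
    (hc1 : Gen f δ (s - c1)) (hc1' : Gen f δ (st - c1)) (hc2 : Gen f δ (s - c2))
    (hxd0 : ∀ i, Gen f δ (x i + s - d0)) (hxd1 : ∀ i, Gen f δ (x i + s - d1))
    (hxc : ∀ i, Gen f δ (x i + c2)) (hxc' : ∀ i, Gen f δ (x i + c2t))
    (hdc0 : Gen f δ (s - c2 - d0)) (hdc1 : Gen f δ (s - c2 - d1)) :
    Evw f δ a x st ![c0, c1, c2t] ![d0t, d1t, -(N : ℂ) * δ] =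
      (sf f δ (δ + s - c0) N * sf f δ (δ + s - c1) N
          / (sf f δ (δ + st - c0) N * sf f δ (δ + st - c1) N))
        * (∏ i, sf f δ (δ + s + x i - a i) N * sf f δ (δ + st + x i) N
            / (sf f δ (δ + s + x i) N * sf f δ (δ + st + x i - a i) N))
        * Evw f δ a x s ![c0, c1, c2] ![d0, d1, -(N : ℂ) * δ] := by
  have gd0t : Gen f δ d0t := hdc1.of_eq 1 (by rw [hd0t]; push_cast; ring)
  have gd1t : Gen f δ d1t := hdc0.of_eq 1 (by rw [hd1t]; push_cast; ring)
  have A := Evw_dual hf hodd hdiff hRiem hδ hbal hx hs hd0 hd1 ha hc0 hc1 hc2 hxd0 hxd1 hd01 hxc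
    hdc0 hdc1
  have B := Evw_dual hf hodd hdiff hRiem hδ (N := N) (a := a) (x := x) (s := st) (c0 := c0)
    (c1 := c1) (c2 := c2t) (d0 := d0t) (d1 := d1t)
    (by rw [hst, hc2t, hd0t, hd1t]; linear_combination hbal) hx hs' gd0t gd1t ha' hc0' hc1'
    (hc2.of_eq 0 (by rw [hst, hc2t]; push_cast; ring))
    (fun i => (hxd0 i).of_eq 0 (by rw [hst, hd0t]; push_cast; ring))
    (fun i => (hxd1 i).of_eq 0 (by rw [hst, hd1t]; push_cast; ring))
    (hd01.of_eq 0 (by rw [hd0t, hd1t]; push_cast; ring)) hxc'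
    (hd1.of_eq (-1) (by rw [hst, hc2t, hd0t]; push_cast; ring))
    (hd0.of_eq (-1) (by rw [hst, hc2t, hd1t]; push_cast; ring))
  have C := Fsum_swap hodd N a x s c0 c1 c2 d0 d1 st c2t d0t d1t hst hc2t hd0t hd1t hd0 hd1
    gd0t gd1t
  rw [← A, ← B] at C
  simp only [Kc, Finset.prod_div_distrib, Finset.prod_mul_distrib] at C ⊢
  rw [show δ + st - c2t = δ + s - c2 by rw [hst, hc2t]; ring] at C
  have pr : ∀ (g : Fin m → ℂ), (∀ j, g j ≠ 0) → ∏ j, g j ≠ 0 :=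
    fun g hg => Finset.prod_ne_zero_iff.mpr fun j _ => hg j
  have m1 : sf f δ (δ + st - c0) N ≠ 0 := (hc0'.of_eq 1 (by push_cast; ring)).sf_ne _
  have m2 : sf f δ (δ + st - c1) N ≠ 0 := (hc1'.of_eq 1 (by push_cast; ring)).sf_ne _
  have m3 : sf f δ (δ + s - c2) N ≠ 0 := (hc2.of_eq 1 (by push_cast; ring)).sf_ne _
  have m4 := hd0.sf_ne N
  have m5 := hd1.sf_ne N
  have m6 := gd0t.sf_ne N
  have m7 := gd1t.sf_ne N
  have m8 : sf f δ δ N ≠ 0 := sf_ne_zero fun l hl => by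
    have := hδ ((l : ℤ) + 1) (by omega)
    convert this using 2; push_cast; ring
  have m9 : ∏ j, sf f δ (δ + s + x j) N ≠ 0 := pr _ fun j =>
    ((hs j).of_eq 1 (by push_cast; ring)).sf_ne _
  have m10 : ∏ j, sf f δ (δ + st + x j) N ≠ 0 := pr _ fun j =>
    ((hs' j).of_eq 1 (by push_cast; ring)).sf_ne _
  have m11 : ∏ j, sf f δ (δ + st + x j - a j) N ≠ 0 := pr _ fun j =>
    ((ha' j).of_eq 1 (by push_cast; ring)).sf_ne _
  generalize Evw f δ a x st ![c0, c1, c2t] ![d0t, d1t, -(N : ℂ) * δ] = Et at *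
  generalize Evw f δ a x s ![c0, c1, c2] ![d0, d1, -(N : ℂ) * δ] = E0 at *
  generalize ∏ j, sf f δ (δ + s + x j) N = P1 at *
  generalize ∏ j, sf f δ (δ + st + x j) N = P2 at *
  generalize ∏ j, sf f δ (δ + st + x j - a j) N = P3 at *
  generalize ∏ j, sf f δ (δ + s + x j - a j) N = P4 at *
  generalize sf f δ (δ + st - c0) N = Q1 at *
  generalize sf f δ (δ + st - c1) N = Q2 at *
  generalize sf f δ (δ + s - c0) N = Q3 at *
  generalize sf f δ (δ + s - c1) N = Q4 at *
  generalize sf f δ (δ + s - c2) N = Q5 at *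
  generalize sf f δ d0 N = D0 at *
  generalize sf f δ d1 N = D1 at *
  generalize sf f δ d0t N = D2 at *
  generalize sf f δ d1t N = D3 at *
  generalize sf f δ δ N = D4 at *
  field_simp at C ⊢
  linear_combination C

/-! ### Removing the genericity assumption -/

theorem sf_continuous {f : ℂ → ℂ} (hc : Continuous f) (δ : ℂ) (n : ℕ) {g : ℂ → ℂ}
    (hg : Continuous g) : Continuous fun t => sf f δ (g t) n := by
  unfold sf
  exact continuous_finsetProd _ fun i _ => hc.comp (hg.add continuous_const)

theorem Del_continuous {f : ℂ → ℂ} (hc : Continuous f) {m : ℕ} {X : ℂ → Fin m → ℂ}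
    (hX : ∀ i, Continuous fun t => X t i) : Continuous fun t => Del f (X t) := by
  unfold Del
  exact continuous_finsetProd _ fun i _ => continuous_finsetProd _ fun j _ =>
    hc.comp ((hX i).sub (hX j))

theorem continuousAt_prod {J : Type} [Fintype J] {g : J → ℂ → ℂ} {t0 : ℂ}
    (h : ∀ j, ContinuousAt (g j) t0) : ContinuousAt (fun t => ∏ j, g j t) t0 :=
  tendsto_finsetProd _ fun j _ => h j

theorem Eterm_continuousAt {f : ℂ → ℂ} (hc : Continuous f) {δ : ℂ} {m n N : ℕ} (a : Fin m → ℂ)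
    {X : ℂ → Fin m → ℂ} {S : ℂ → ℂ} {U V : ℂ → Fin n → ℂ}
    (hX : ∀ i, Continuous fun t => X t i) (hS : Continuous S)
    (hU : ∀ k, Continuous fun t => U t k) (hV : ∀ k, Continuous fun t => V t k) (t0 : ℂ)
    (h1 : ∀ i j, i ≠ j → f (X t0 i - X t0 j) ≠ 0) (h2 : ∀ i, f (X t0 i + S t0) ≠ 0)
    (h3 : ∀ (j : Fin m) (l : ℕ), l < N → f (δ + S t0 + X t0 j - a j + (l : ℂ) * δ) ≠ 0)
    (h4 : ∀ (i j : Fin m) (l : ℕ), l < N → f (X t0 i - X t0 j + δ + (l : ℂ) * δ) ≠ 0)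
    (h5 : ∀ k (l : ℕ), l < N → f (δ + S t0 - U t0 k + (l : ℂ) * δ) ≠ 0)
    (h6 : ∀ (i : Fin m) k (l : ℕ), l < N → f (X t0 i + δ + S t0 - V t0 k + (l : ℂ) * δ) ≠ 0)
    (μ : Fin m → ℕ) (hμ : ∑ i, μ i ≤ N) :
    ContinuousAt (fun t => Eterm f δ a (X t) (S t) (U t) (V t) μ) t0 := by
  have hμi : ∀ i, μ i ≤ N := fun i =>
    (Finset.single_le_sum (fun _ _ => Nat.zero_le _) (Finset.mem_univ i)).trans hμ
  unfold Eterm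
  refine ContinuousAt.mul (ContinuousAt.mul (ContinuousAt.mul ?_ ?_) ?_) ?_
  · refine ContinuousAt.div ?_ (Del_continuous hc hX).continuousAt ?_
    · exact (Del_continuous hc fun i => (hX i).add continuous_const).continuousAt
    · exact Finset.prod_ne_zero_iff.mpr fun i _ => Finset.prod_ne_zero_iff.mpr fun j hj =>
        h1 i j (Finset.mem_filter.mp hj).2.ne
  · refine continuousAt_prod fun i => ContinuousAt.div ?_ ?_ (h2 i)
    · exact (hc.comp (((hX i).add hS).add continuous_const)).continuousAt
    · exact (hc.comp ((hX i).add hS)).continuousAt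
  · refine continuousAt_prod fun j => ContinuousAt.mul (ContinuousAt.div ?_ ?_ ?_)
      (continuousAt_prod fun i => ContinuousAt.div ?_ ?_ ?_)
    · exact (sf_continuous hc δ _ (hS.add (hX j))).continuousAt
    · exact (sf_continuous hc δ _
        (((continuous_const.add hS).add (hX j)).sub continuous_const)).continuousAt
    · exact sf_ne_zero fun l hl => h3 j l (hl.trans_le hμ)
    · exact (sf_continuous hc δ _ (((hX i).sub (hX j)).add continuous_const)).continuousAt
    · exact (sf_continuous hc δ _ (((hX i).sub (hX j)).add continuous_const)).continuousAt
    · exact sf_ne_zero fun l hl => h4 i j l (hl.trans_le (hμi i))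
  · refine continuousAt_prod fun k => ContinuousAt.mul (ContinuousAt.div ?_ ?_ ?_)
      (continuousAt_prod fun i => ContinuousAt.div ?_ ?_ ?_)
    · exact (sf_continuous hc δ _ (hV k)).continuousAt
    · exact (sf_continuous hc δ _ ((continuous_const.add hS).sub (hU k))).continuousAt
    · exact sf_ne_zero fun l hl => h5 k l (hl.trans_le hμ)
    · exact (sf_continuous hc δ _ ((hX i).add (hU k))).continuousAt
    · exact (sf_continuous hc δ _
        ((((hX i).add continuous_const).add hS).sub (hV k))).continuousAt
    · exact sf_ne_zero fun l hl => h6 i k l (hl.trans_le (hμi i))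

/-- Along a line with nonzero velocity all but countably many points are generic. -/
theorem gen_cocountable {f : ℂ → ℂ} (hf : f ≠ 0) (hdiff : Differentiable ℂ f) (δ p q : ℂ)
    (hq : q ≠ 0) : ∀ᶠ t in Filter.cocountable, Gen f δ (p + t * q) := by
  refine Filter.mem_of_superset (x := (⋃ k : ℤ, (fun t : ℂ => p + t * q + k * δ) ⁻¹'
    {z : ℂ | f z = 0})ᶜ) ?_ ?_
  · rw [Filter.mem_cocountable, compl_compl]
    refine Set.countable_iUnion fun k => (zeros_countable hf hdiff).preimage ?_
    intro t t' h
    have h' : t * q = t' * q := add_left_cancel (add_right_cancel h)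
    exact mul_right_cancel₀ hq h'
  · intro t ht k hk
    exact ht (Set.mem_iUnion.mpr ⟨k, hk⟩)

theorem gen_cocountable_of_eq {f : ℂ → ℂ} (hf : f ≠ 0) (hdiff : Differentiable ℂ f) {δ : ℂ}
    {g : ℂ → ℂ} (p q : ℂ) (hq : q ≠ 0) (e : ∀ t, g t = p + t * q) :
    ∀ᶠ t in Filter.cocountable, Gen f δ (g t) := by
  simp only [e]
  exact gen_cocountable hf hdiff δ p q hq

/-- Functions agreeing off a countable set agree at any common point of continuity. -/
theorem eq_of_cocountable {L R : ℂ → ℂ} {t0 : ℂ} (hL : ContinuousAt L t0)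
    (hR : ContinuousAt R t0) (h : ∀ᶠ t in Filter.cocountable, L t = R t) : L t0 = R t0 := by
  have hd : Dense {t | L t = R t} := by
    have := (Filter.mem_cocountable.mp h).dense_compl ℂ
    rwa [compl_compl] at this
  have := mem_closure_iff_nhdsWithin_neBot.mp (hd t0)
  refine tendsto_nhds_unique_of_eventuallyEq (hL.mono_left (nhdsWithin_le_nhds))
    (hR.mono_left nhdsWithin_le_nhds) (l := nhdsWithin t0 {t | L t = R t}) ?_
  exact Filter.eventually_of_mem self_mem_nhdsWithin fun t ht => ht

/-! ### The transformation -/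

/-- **Multiple Bailey transformation I** (Theorem 4.1, formula (4.4)). -/
theorem multiple_bailey_transformation_I
    (f : ℂ → ℂ) (hf : f ≠ 0) (hodd : ∀ t : ℂ, f (-t) = -f t) (hdiff : Differentiable ℂ f)
    (hRiem : ∀ x y u v : ℂ,
      f (x + y) * f (x - y) * f (u + v) * f (u - v) =
        f (x + u) * f (x - u) * f (y + v) * f (y - v)
          - f (x + v) * f (x - v) * f (y + u) * f (y - u))
    (δ : ℂ) (hδ : ∀ k : ℤ, k ≠ 0 → f ((k : ℂ) * δ) ≠ 0)
    (m N : ℕ) (a x : Fin m → ℂ) (s c0 c1 c2 d0 d1 d2 : ℂ)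
    (hbal : (∑ i, a i) + (c0 + c1 + c2 + d0 + d1 + d2) = 2 * δ + 3 * s)
    (hd2 : d2 = -(N : ℂ) * δ)
    (st : ℂ) (hst : st = δ + 2 * s - c2 - d0 - d1)
    (c2t : ℂ) (hc2t : c2t = δ + s - d0 - d1)
    (d0t : ℂ) (hd0t : d0t = δ + s - c2 - d1)
    (d1t : ℂ) (hd1t : d1t = δ + s - c2 - d0)
    (h1 : ∀ i j, i ≠ j → f (x i - x j) ≠ 0)
    (h2 : ∀ i, f (x i + s) ≠ 0) (h2t : ∀ i, f (x i + st) ≠ 0)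
    (h3 : ∀ (j : Fin m) (l : ℕ), l < N → f (δ + s + x j - a j + (l : ℂ) * δ) ≠ 0)
    (h3t : ∀ (j : Fin m) (l : ℕ), l < N → f (δ + st + x j - a j + (l : ℂ) * δ) ≠ 0)
    (h4 : ∀ (i j : Fin m) (l : ℕ), l < N → f (x i - x j + δ + (l : ℂ) * δ) ≠ 0)
    (h5 : ∀ (k : Fin 3) (l : ℕ), l < N → f (δ + s - ![c0, c1, c2] k + (l : ℂ) * δ) ≠ 0)
    (h5t : ∀ (k : Fin 3) (l : ℕ), l < N →
      f (δ + st - ![c0, c1, c2t] k + (l : ℂ) * δ) ≠ 0)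
    (h6 : ∀ (i : Fin m) (k : Fin 3) (l : ℕ), l < N →
      f (x i + δ + s - ![d0, d1, d2] k + (l : ℂ) * δ) ≠ 0)
    (h6t : ∀ (i : Fin m) (k : Fin 3) (l : ℕ), l < N →
      f (x i + δ + st - ![d0t, d1t, d2] k + (l : ℂ) * δ) ≠ 0)
    (h7 : ∀ (i : Fin m) (l : ℕ), l < N → f (δ + s + x i + (l : ℂ) * δ) ≠ 0) :
    Evw f δ a x st ![c0, c1, c2t] ![d0t, d1t, d2] =
      (sf f δ (δ + s - c0) N * sf f δ (δ + s - c1) N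
          / (sf f δ (δ + st - c0) N * sf f δ (δ + st - c1) N))
        * (∏ i, sf f δ (δ + s + x i - a i) N * sf f δ (δ + st + x i) N
            / (sf f δ (δ + s + x i) N * sf f δ (δ + st + x i - a i) N))
        * Evw f δ a x s ![c0, c1, c2] ![d0, d1, d2] := by
  subst hd2
  have hc : Continuous f := hdiff.continuous
  -- A line through the given parameters on which the balancing condition persists and along
  -- which every linear form required to be generic has nonzero velocity.
  let X : ℂ → Fin m → ℂ := fun t i => x i + t * ((i : ℕ) : ℂ)
  let S : ℂ → ℂ := fun t => s + t * (10 * Complex.I)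
  let St : ℂ → ℂ := fun t => st + t * (13 * Complex.I)
  let C0 : ℂ → ℂ := fun t => c0 + t * (23 * Complex.I)
  let C2 : ℂ → ℂ := fun t => c2 + t * (4 * Complex.I)
  let C2t : ℂ → ℂ := fun t => c2t + t * (7 * Complex.I)
  let D0 : ℂ → ℂ := fun t => d0 + t * Complex.I
  let D1 : ℂ → ℂ := fun t => d1 + t * (2 * Complex.I)
  let D0t : ℂ → ℂ := fun t => d0t + t * (4 * Complex.I)
  let D1t : ℂ → ℂ := fun t => d1t + t * (5 * Complex.I)
  have hX : ∀ i, Continuous fun t => X t i := fun i => by fun_prop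
  have hS : Continuous S := by fun_prop
  have hSt : Continuous St := by fun_prop
  have hC0 : Continuous C0 := by fun_prop
  have hC2 : Continuous C2 := by fun_prop
  have hC2t : Continuous C2t := by fun_prop
  have hD0 : Continuous D0 := by fun_prop
  have hD1 : Continuous D1 := by fun_prop
  have hD0t : Continuous D0t := by fun_prop
  have hD1t : Continuous D1t := by fun_prop
  have zX : X 0 = x := by funext i; simp [X]
  have zS : S 0 = s := by simp [S]
  have zSt : St 0 = st := by simp [St]
  have zC0 : C0 0 = c0 := by simp [C0]
  have zC2 : C2 0 = c2 := by simp [C2]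
  have zC2t : C2t 0 = c2t := by simp [C2t]
  have zD0 : D0 0 = d0 := by simp [D0]
  have zD1 : D1 0 = d1 := by simp [D1]
  have zD0t : D0t 0 = d0t := by simp [D0t]
  have zD1t : D1t 0 = d1t := by simp [D1t]
  have hle : ∀ ν ∈ piAntidiag (univ : Finset (Option (Fin m))) N,
      ∑ i, ν (some i) ≤ N := by
    intro ν hν
    have h := (mem_piAntidiag.mp hν).1
    rw [Fintype.sum_option] at h
    omega
  have hLc : ContinuousAt (fun t => Evw f δ a (X t) (St t) ![C0 t, c1, C2t t]
      ![D0t t, D1t t, -(N : ℂ) * δ]) 0 := by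
    simp only [Evw_eq_sum hodd]
    refine tendsto_finsetSum _ fun ν hν => ?_
    refine Eterm_continuousAt (N := N) hc a hX hSt (U := fun t => ![C0 t, c1, C2t t])
      (V := fun t => ![D0t t, D1t t, -(N : ℂ) * δ]) ?_ ?_ 0 ?_ ?_ ?_ ?_ ?_ ?_ _ (hle ν hν)
    · intro k; fin_cases k <;> simp <;> fun_prop
    · intro k; fin_cases k <;> simp <;> fun_prop
    all_goals simpa only [zX, zSt, zC0, zC2t, zD0t, zD1t]
  have hEc : ContinuousAt (fun t => Evw f δ a (X t) (S t) ![C0 t, c1, C2 t]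
      ![D0 t, D1 t, -(N : ℂ) * δ]) 0 := by
    simp only [Evw_eq_sum hodd]
    refine tendsto_finsetSum _ fun ν hν => ?_
    refine Eterm_continuousAt (N := N) hc a hX hS (U := fun t => ![C0 t, c1, C2 t])
      (V := fun t => ![D0 t, D1 t, -(N : ℂ) * δ]) ?_ ?_ 0 ?_ ?_ ?_ ?_ ?_ ?_ _ (hle ν hν)
    · intro k; fin_cases k <;> simp <;> fun_prop
    · intro k; fin_cases k <;> simp <;> fun_prop
    all_goals simpa only [zX, zS, zC0, zC2, zD0, zD1]
  have hRc : ContinuousAt (fun t =>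
      (sf f δ (δ + S t - C0 t) N * sf f δ (δ + S t - c1) N
          / (sf f δ (δ + St t - C0 t) N * sf f δ (δ + St t - c1) N))
        * (∏ i, sf f δ (δ + S t + X t i - a i) N * sf f δ (δ + St t + X t i) N
            / (sf f δ (δ + S t + X t i) N * sf f δ (δ + St t + X t i - a i) N))
        * Evw f δ a (X t) (S t) ![C0 t, c1, C2 t] ![D0 t, D1 t, -(N : ℂ) * δ]) 0 := by
    have cs : ∀ {g : ℂ → ℂ}, Continuous g → ContinuousAt (fun t => sf f δ (g t) N) 0 :=
      fun hg => (sf_continuous hc δ N hg).continuousAt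
    refine ContinuousAt.mul (ContinuousAt.mul (ContinuousAt.div ?_ ?_ ?_)
      (continuousAt_prod fun i => ContinuousAt.div ?_ ?_ ?_)) hEc
    · exact (cs (by fun_prop)).mul (cs (by fun_prop))
    · exact (cs (by fun_prop)).mul (cs (by fun_prop))
    · rw [zSt, zC0]
      exact mul_ne_zero (sf_ne_zero fun l hl => h5t 0 l hl) (sf_ne_zero fun l hl => h5t 1 l hl)
    · have := hX i
      exact (cs (by fun_prop)).mul (cs (by fun_prop))
    · have := hX i
      exact (cs (by fun_prop)).mul (cs (by fun_prop))
    · rw [zS, zSt, zX]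
      exact mul_ne_zero (sf_ne_zero fun l hl => h7 i l hl) (sf_ne_zero fun l hl => h3t i l hl)
  have vI : ∀ (n : ℕ) (r : ℝ), r ≠ 0 → (n : ℂ) + r * Complex.I ≠ 0 := by
    intro n r hr h
    have := congrArg Complex.im h
    simp at this
    exact hr this
  have vJ : ∀ r : ℝ, r ≠ 0 → (r : ℂ) * Complex.I ≠ 0 := by
    intro r hr h
    exact vI 0 r hr (by simpa using h)
  have key : ∀ᶠ t in Filter.cocountable, Evw f δ a (X t) (St t) ![C0 t, c1, C2t t]
      ![D0t t, D1t t, -(N : ℂ) * δ] =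
      (sf f δ (δ + S t - C0 t) N * sf f δ (δ + S t - c1) N
          / (sf f δ (δ + St t - C0 t) N * sf f δ (δ + St t - c1) N))
        * (∏ i, sf f δ (δ + S t + X t i - a i) N * sf f δ (δ + St t + X t i) N
            / (sf f δ (δ + S t + X t i) N * sf f δ (δ + St t + X t i - a i) N))
        * Evw f δ a (X t) (S t) ![C0 t, c1, C2 t] ![D0 t, D1 t, -(N : ℂ) * δ] := by
    have G : ∀ {g : ℂ → ℂ} (p q : ℂ), q ≠ 0 → (∀ t, g t = p + t * q) →
        ∀ᶠ t in Filter.cocountable, Gen f δ (g t) :=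
      fun p q hq e => gen_cocountable_of_eq hf hdiff p q hq e
    have k1 : ∀ᶠ t in Filter.cocountable, ∀ i j, i ≠ j → Gen f δ (X t i - X t j) := by
      refine Filter.eventually_all.mpr fun i => Filter.eventually_all.mpr fun j => ?_
      by_cases hij : i = j
      · exact Filter.Eventually.of_forall fun t h => absurd hij h
      · refine (G (x i - x j) (((i : ℕ) : ℂ) - ((j : ℕ) : ℂ)) ?_ fun t => ?_).mono
          fun t ht _ => ht
        · rw [sub_ne_zero]
          exact_mod_cast fun h => hij (Fin.ext h)
        · simp only [X]; ring
    have k2 : ∀ᶠ t in Filter.cocountable, ∀ i, Gen f δ (X t i + S t) :=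
      Filter.eventually_all.mpr fun i => G (x i + s) _ (vI i 10 (by norm_num))
        fun t => by simp only [X, S]; push_cast; ring
    have k3 : ∀ᶠ t in Filter.cocountable, ∀ i, Gen f δ (X t i + St t) :=
      Filter.eventually_all.mpr fun i => G (x i + st) _ (vI i 13 (by norm_num))
        fun t => by simp only [X, St]; push_cast; ring
    have k4 := G (g := D0) d0 _ (vJ 1 (by norm_num)) fun t => by simp only [D0]; push_cast; ring
    have k5 := G (g := D1) d1 _ (vJ 2 (by norm_num)) fun t => by simp only [D1]; push_cast; ring
    have k6 := G (g := fun t => D0 t - D1 t) (d0 - d1) _ (vJ (-1) (by norm_num))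
      fun t => by simp only [D0, D1]; push_cast; ring
    have k7 : ∀ᶠ t in Filter.cocountable, ∀ i, Gen f δ (S t + X t i - a i) :=
      Filter.eventually_all.mpr fun i => G (s + x i - a i) _ (vI i 10 (by norm_num))
        fun t => by simp only [X, S]; push_cast; ring
    have k8 : ∀ᶠ t in Filter.cocountable, ∀ i, Gen f δ (St t + X t i - a i) :=
      Filter.eventually_all.mpr fun i => G (st + x i - a i) _ (vI i 13 (by norm_num))
        fun t => by simp only [X, St]; push_cast; ring
    have k9 := G (g := fun t => S t - C0 t) (s - c0) _ (vJ (-13) (by norm_num))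
      fun t => by simp only [S, C0]; push_cast; ring
    have k10 := G (g := fun t => St t - C0 t) (st - c0) _ (vJ (-10) (by norm_num))
      fun t => by simp only [St, C0]; push_cast; ring
    have k11 := G (g := fun t => S t - c1) (s - c1) _ (vJ 10 (by norm_num))
      fun t => by simp only [S]; push_cast; ring
    have k12 := G (g := fun t => St t - c1) (st - c1) _ (vJ 13 (by norm_num))
      fun t => by simp only [St]; push_cast; ring
    have k13 := G (g := fun t => S t - C2 t) (s - c2) _ (vJ 6 (by norm_num))
      fun t => by simp only [S, C2]; push_cast; ring
    have k14 : ∀ᶠ t in Filter.cocountable, ∀ i, Gen f δ (X t i + S t - D0 t) :=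
      Filter.eventually_all.mpr fun i => G (x i + s - d0) _ (vI i 9 (by norm_num))
        fun t => by simp only [X, S, D0]; push_cast; ring
    have k15 : ∀ᶠ t in Filter.cocountable, ∀ i, Gen f δ (X t i + S t - D1 t) :=
      Filter.eventually_all.mpr fun i => G (x i + s - d1) _ (vI i 8 (by norm_num))
        fun t => by simp only [X, S, D1]; push_cast; ring
    have k16 : ∀ᶠ t in Filter.cocountable, ∀ i, Gen f δ (X t i + C2 t) :=
      Filter.eventually_all.mpr fun i => G (x i + c2) _ (vI i 4 (by norm_num))
        fun t => by simp only [X, C2]; push_cast; ring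
    have k17 : ∀ᶠ t in Filter.cocountable, ∀ i, Gen f δ (X t i + C2t t) :=
      Filter.eventually_all.mpr fun i => G (x i + c2t) _ (vI i 7 (by norm_num))
        fun t => by simp only [X, C2t]; push_cast; ring
    have k18 := G (g := fun t => S t - C2 t - D0 t) (s - c2 - d0) _ (vJ 5 (by norm_num))
      fun t => by simp only [S, C2, D0]; push_cast; ring
    have k19 := G (g := fun t => S t - C2 t - D1 t) (s - c2 - d1) _ (vJ 4 (by norm_num))
      fun t => by simp only [S, C2, D1]; push_cast; ring
    filter_upwards [k1, k2, k3, k4, k5, k6, k7, k8, k9, k10, k11, k12, k13, k14, k15, k16, k17,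
      k18, k19] with t k1 k2 k3 k4 k5 k6 k7 k8 k9 k10 k11 k12 k13 k14 k15 k16 k17 k18 k19
    refine bailey_generic hf hodd hdiff hRiem hδ ?_ ?_ ?_ ?_ ?_ k1 k2 k3 k4 k5 k6 k7 k8 k9 k10
      k11 k12 k13 k14 k15 k16 k17 k18 k19
    · simp only [S, C0, C2, D0, D1]; linear_combination hbal
    · simp only [St, S, C2, D0, D1]; linear_combination hst
    · simp only [C2t, S, D0, D1]; linear_combination hc2t
    · simp only [D0t, S, C2, D1]; linear_combination hd0t
    · simp only [D1t, S, C2, D0]; linear_combination hd1t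
  have h := eq_of_cocountable hLc hRc key
  simpa only [zX, zS, zSt, zC0, zC2, zC2t, zD0, zD1, zD0t, zD1t] using h
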